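/- Suppose that μ is doubling, that s > 0 satisfies the dimension condition, and that P supports a p-Poincaré inequality, where one of the following holds: (i) p > s and X ↪ L^p_loc; (ii) 1 = p = s and X ↪ L^s(log L)^α_loc for some α ≥ 1; (iii) 1 < p = s and X ↪ L^s(log L)^α_loc for some α > 1; (iv) 1 ≤ p < s and X ↪ L^{s,1}_loc. Then for every u ∈ N¹X there exists v ∈ N¹X which is continuous on P and satisfies u = v C_X-quasi-everywhere. Moreover, in case (i) v is locally (1 − s/p)-Hölder continuous. -/

import Mathlib

/-!
Fix an upper gradient `g ∈ X` of `u`. Write `S(z, r)` for the dyadic potential of `g`, i.e. the sum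
over `k` of the right-hand sides of the Poincaré inequality on the balls `B(z, 2⁻ᵏ r)`. Telescoping
averages over shrinking balls shows that `|u x - u y| ≤ C (S(x, 4δ) + S(y, 4δ))` for Lebesgue points
`x`, `y` with `dist x y ≤ δ`. If `S(z, r) → 0` as `r → 0` along a geometric sequence, locally
uniformly in `z`, then `u` restricted to its dense set of Lebesgue points extends to a continuous
function `v`, equal to `u` almost everywhere.

The uniform decay of `S` is where the integrability of `g` enters. If `p > s`, the dimension
condition makes the terms a geometric series and gives `S(z, r) ≤ C r ^ (1 - s / p)`, which also
yields the Hölder estimate. If `p ≤ s`, the average of `g ^ p` over a ball is bounded by an average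
of the rearrangement `(g*) ^ p` over an interval `(0, m)`, so the bound no longer depends on the
centre, and a one-dimensional series remains. It converges by the Zygmund or Lorentz integrability
of `g`.

Finally, equality almost everywhere improves to equality quasi-everywhere: the function
`∞ · χ_{u ≠ v}` has zero norm, and every curve along which both it and `g` have finite integral has
its endpoints outside `{u ≠ v}`. Hence adding it to `g` gives an upper gradient of `v`, and adding
it to `ε g` gives an upper gradient of the indicator function of `{u ≠ v}`.
-/

open MeasureTheory Filter Set Topology Metric ENNReal
open scoped NNReal

noncomputable section

/-- A (non-constant, rectifiable) curve in `P`, parametrized by arc length. -/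
structure Curve (P : Type*) [PseudoMetricSpace P] where
  len : ℝ
  len_pos : 0 < len
  toFun : ℝ → P
  lip : LipschitzOnWith 1 toFun (Set.Icc 0 len)

variable {P : Type*}

/-- The curve integral `∫_γ ρ ds`. -/
def curveLint [PseudoMetricSpace P] (γ : Curve P) (ρ : P → ℝ≥0∞) : ℝ≥0∞ :=
  ∫⁻ t in Set.Icc (0 : ℝ) γ.len, ρ (γ.toFun t)

/-- `g` is an upper gradient of `u`. -/
def IsUpperGradient [PseudoMetricSpace P] [MeasurableSpace P]
    (u : P → EReal) (g : P → ℝ≥0∞) : Prop :=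
  Measurable g ∧
    ∀ γ : Curve P, (u (γ.toFun 0) - u (γ.toFun γ.len)).abs ≤ curveLint γ g

/-- A quasi-Banach function lattice over `(P, μ)` with continuous quasi-norm. -/
structure QBFL (P : Type*) [MeasurableSpace P] (μ : MeasureTheory.Measure P) where
  nrm : (P → EReal) → ℝ≥0∞
  cc : ℝ≥0∞
  one_le_cc : 1 ≤ cc
  cc_lt_top : cc < ⊤
  nrm_eq_zero_iff : ∀ u : P → EReal, Measurable u → (nrm u = 0 ↔ u =ᵐ[μ] 0)
  nrm_smul : ∀ (a : ℝ) (u : P → EReal),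
    nrm (fun x => (a : EReal) * u x) = ENNReal.ofReal |a| * nrm u
  nrm_triangle : ∀ u v : P → EReal,
    nrm (fun x => u x + v x) ≤ cc * (nrm u + nrm v)
  nrm_mono : ∀ u v : P → EReal, (∀ᵐ x ∂μ, (u x).abs ≤ (v x).abs) → nrm u ≤ nrm v
  nrm_rieszFischer : ∀ f : ℕ → P → EReal, (∀ n, ∀ᵐ x ∂μ, 0 ≤ f n x) →
    nrm (fun x => ∑' n, f n x) ≤ ∑' n, cc ^ (n + 1) * nrm (f n)
  nrm_continuous : ∀ (f : ℕ → P → EReal) (u : P → EReal),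
    Tendsto (fun n => nrm fun x => f n x - u x) atTop (𝓝 0) →
    Tendsto (fun n => nrm (f n)) atTop (𝓝 (nrm u))

variable [MetricSpace P] [MeasurableSpace P] {μ : MeasureTheory.Measure P}

/-- The quasi-norm applied to a `ℝ≥0∞`-valued function. -/
def QBFL.nrmE (X : QBFL P μ) (g : P → ℝ≥0∞) : ℝ≥0∞ :=
  X.nrm fun x => (g x : EReal)

/-- The Newtonian quasi-seminorm `‖u‖_{N¹X}`. -/
def QBFL.newt (X : QBFL P μ) (u : P → EReal) : ℝ≥0∞ :=
  X.nrm u + ⨅ g ∈ {g : P → ℝ≥0∞ | IsUpperGradient u g}, X.nrmE g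

/-- Membership in the Newtonian space `N¹X`. -/
def QBFL.memN1 (X : QBFL P μ) (u : P → EReal) : Prop :=
  Measurable u ∧ X.newt u < ⊤

/-- The Sobolev capacity `C_X`. -/
def QBFL.cap (X : QBFL P μ) (E : Set P) : ℝ≥0∞ :=
  ⨅ u ∈ {u : P → EReal | X.memN1 u ∧ ∀ x ∈ E, 1 ≤ u x}, X.newt u


/-- `g` is an `X`-weak upper gradient of `u`: the upper gradient inequality holds for all
curves outside some family of zero `X`-modulus. -/
def IsWeakUpperGradient (X : QBFL P μ) (u : P → EReal) (g : P → ℝ≥0∞) : Prop :=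
  Measurable g ∧ ∃ Γ : Set (Curve P),
    (∃ ρ : P → ℝ≥0∞, Measurable ρ ∧ X.nrmE ρ < ⊤ ∧ ∀ γ ∈ Γ, curveLint γ ρ = ⊤) ∧
    ∀ γ : Curve P, γ ∉ Γ →
      (u (γ.toFun 0) - u (γ.toFun γ.len)).abs ≤ curveLint γ g

/-- The `C_X`-essential supremum of `f` over `B`. -/
def QBFL.capEssSup (X : QBFL P μ) (B : Set P) (f : P → ℝ≥0∞) : ℝ≥0∞ :=
  sInf {t : ℝ≥0∞ | X.cap {x ∈ B | t < f x} = 0}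

/-- `μ` is doubling with constant `cdbl`. -/
def IsDoublingWith (μ : MeasureTheory.Measure P) (cdbl : ℝ≥0∞) : Prop :=
  ∀ (x : P) (r : ℝ), 0 < r → μ (ball x (2 * r)) ≤ cdbl * μ (ball x r)

/-- The exponent `s` satisfies the dimension condition with constant `cs`:
`μ(B(y,r))/μ(B(x,R)) ≥ cs (r/R)^s` whenever `0 < r ≤ R` and `y ∈ B(x,R)`. -/
def DimensionCond (μ : MeasureTheory.Measure P) (s : ℝ) (cs : ℝ≥0∞) : Prop :=
  ∀ (x y : P) (r R : ℝ), 0 < r → r ≤ R → y ∈ ball x R →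
    cs * ENNReal.ofReal ((r / R) ^ s) * μ (ball x R) ≤ μ (ball y r)

/-- `P` supports a `p`-Poincaré inequality with constants `cPI` and dilation `lam`. -/
def PoincareInequality (μ : MeasureTheory.Measure P) (p cPI lam : ℝ) : Prop :=
  ∀ (x : P) (r : ℝ), 0 < r → ∀ u : P → ℝ, LocallyIntegrable u μ →
    ∀ g : P → ℝ≥0∞, IsUpperGradient (fun y => (u y : EReal)) g →
      ENNReal.ofReal (⨍ y in ball x r, |u y - ⨍ z in ball x r, u z ∂μ| ∂μ) ≤
        ENNReal.ofReal (cPI * (2 * r)) *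
          ((μ (ball x (lam * r)))⁻¹ * ∫⁻ y in ball x (lam * r), g y ^ p ∂μ) ^ (1 / p)

/-- The decreasing rearrangement `f*` of `f` with respect to `μ`. -/
def decRearr (μ : MeasureTheory.Measure P) (f : P → EReal) (t : ℝ) : ℝ≥0∞ :=
  sInf {τ : ℝ≥0∞ | μ {x | τ < (f x).abs} ≤ ENNReal.ofReal t}

/-- The Zygmund quasi-norm `‖u χ_E‖_{L^p(log L)^α(E)}`. -/
def zygNorm (μ : MeasureTheory.Measure P) (p α : ℝ) (E : Set P) (u : P → EReal) : ℝ≥0∞ :=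
  (∫⁻ t in Set.Ioo (0 : ℝ) (μ E).toReal,
      (decRearr μ (E.indicator u) t *
        ENNReal.ofReal ((1 + Real.log ((μ E).toReal / t)) ^ α)) ^ p) ^ (1 / p)

/-- The Lorentz norm `‖u‖_{L^{s,1}}`. -/
def lorentzNorm (μ : MeasureTheory.Measure P) (s : ℝ) (u : P → EReal) : ℝ≥0∞ :=
  ENNReal.ofReal (1 / s) *
    ∫⁻ t in Set.Ioi (0 : ℝ), decRearr μ u t * ENNReal.ofReal (t ^ (1 / s - 1))

/-- `X ↪ L^p_loc`. -/
def EmbedsLpLoc (X : QBFL P μ) (p : ℝ) : Prop :=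
  ∀ (x : P) (r : ℝ), 0 < r → ∃ c : ℝ≥0∞, c < ⊤ ∧ ∀ u : P → EReal,
    (∫⁻ y in ball x r, (u y).abs ^ p ∂μ) ^ (1 / p) ≤ c * X.nrm ((ball x r).indicator u)

/-- `X ↪ L^s(log L)^α_loc`. -/
def EmbedsZygmundLoc (X : QBFL P μ) (s α : ℝ) : Prop :=
  ∀ (x : P) (r : ℝ), 0 < r → ∃ c : ℝ≥0∞, c < ⊤ ∧ ∀ u : P → EReal,
    zygNorm μ s α (ball x r) u ≤ c * X.nrm ((ball x r).indicator u)

/-- `X ↪ L^{s,1}_loc`. -/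
def EmbedsLorentzLoc (X : QBFL P μ) (s : ℝ) : Prop :=
  ∀ (x : P) (r : ℝ), 0 < r → ∃ c : ℝ≥0∞, c < ⊤ ∧ ∀ u : P → EReal,
    lorentzNorm μ s ((ball x r).indicator u) ≤ c * X.nrm ((ball x r).indicator u)

/-! ### Almost everywhere and quasi-everywhere equality -/

section Curves

variable {Q : Type*} [PseudoMetricSpace Q]

/-- The curve traversed backwards. -/
def Curve.reverse (γ : Curve Q) : Curve Q where
  len := γ.len
  len_pos := γ.len_pos
  toFun t := γ.toFun (γ.len - t)
  lip a ha b hb := by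
    simpa only [edist_sub_left] using
      γ.lip (x := γ.len - a) ⟨sub_nonneg.2 ha.2, sub_le_self _ ha.1⟩
        (y := γ.len - b) ⟨sub_nonneg.2 hb.2, sub_le_self _ hb.1⟩

/-- The initial segment of a curve, up to the parameter `t`. -/
def Curve.initial (γ : Curve Q) {t : ℝ} (ht : t ∈ Ioc 0 γ.len) : Curve Q where
  len := t
  len_pos := ht.1
  toFun := γ.toFun
  lip := γ.lip.mono (Icc_subset_Icc_right ht.2)

lemma curveLint_reverse (γ : Curve Q) (ρ : Q → ℝ≥0∞) :
    curveLint γ.reverse ρ = curveLint γ ρ := by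
  have h := (Measure.measurePreserving_sub_left (volume : Measure ℝ) γ.len)
    |>.setLIntegral_comp_preimage_emb (measurableEmbedding_subLeft γ.len)
      (fun t => ρ (γ.toFun t)) (Icc 0 γ.len)
  rwa [preimage_const_sub_Icc, sub_self, sub_zero] at h

lemma curveLint_mono (γ : Curve Q) {ρ σ : Q → ℝ≥0∞} (h : ρ ≤ σ) : curveLint γ ρ ≤ curveLint γ σ :=
  lintegral_mono fun _ => h _

lemma Curve.tendsto_toFun (γ : Curve Q) : Tendsto γ.toFun (𝓝[>] 0) (𝓝 (γ.toFun 0)) :=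
  (γ.lip.continuousOn 0 ⟨le_rfl, γ.len_pos.le⟩).tendsto.mono_left <|
    nhdsWithin_le_of_mem (Icc_mem_nhdsGT γ.len_pos)

lemma tendsto_curveLint_initial {γ : Curve Q} {ρ : Q → ℝ≥0∞} (h : curveLint γ ρ ≠ ⊤) :
    Tendsto (fun t => ∫⁻ τ in Icc 0 t, ρ (γ.toFun τ)) (𝓝[>] 0) (𝓝 0) := by
  have hvol : Tendsto (fun t : ℝ => volume.restrict (Icc 0 γ.len) (Icc 0 t)) (𝓝[>] 0) (𝓝 0) := by
    have hle (t : ℝ) : volume.restrict (Icc 0 γ.len) (Icc 0 t) ≤ ENNReal.ofReal t := by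
      simpa using Measure.restrict_apply_le (μ := volume) (Icc 0 γ.len) (Icc 0 t)
    refine tendsto_of_tendsto_of_tendsto_of_le_of_le tendsto_const_nhds ?_ (fun _ => zero_le) hle
    simpa using (ENNReal.tendsto_ofReal (tendsto_id (x := 𝓝 (0 : ℝ)))).mono_left nhdsWithin_le_nhds
  refine (tendsto_setLIntegral_zero h hvol).congr' ?_
  filter_upwards [Ioc_mem_nhdsGT γ.len_pos] with t ht
  rw [Measure.restrict_restrict measurableSet_Icc, inter_eq_left.2 (Icc_subset_Icc_right ht.2)]

lemma Curve.frequently_notMem [MeasurableSpace Q] [BorelSpace Q] {γ : Curve Q} {N : Set Q}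
    (hN : MeasurableSet N) (h : curveLint γ (N.indicator fun _ => ⊤) ≠ ⊤) :
    ∃ᶠ t in 𝓝[>] 0, γ.toFun t ∉ N := by
  have hae : ∀ᵐ t ∂volume.restrict (Icc 0 γ.len), γ.toFun t ∉ N := by
    have hmeas : Measurable (N.indicator fun _ => (⊤ : ℝ≥0∞)) := measurable_const.indicator hN
    have hγ := γ.lip.continuousOn.aemeasurable measurableSet_Icc (μ := volume)
    filter_upwards [ae_lt_top' (hmeas.comp_aemeasurable hγ) h] with t ht hmem
    simp [hmem] at ht
  rw [ae_iff, Measure.restrict_apply' measurableSet_Icc] at hae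
  intro hcon
  obtain ⟨b, hb, hsub⟩ := mem_nhdsGT_iff_exists_Ioo_subset.1
    (hcon.and (Icc_mem_nhdsGT γ.len_pos))
  have hzero : volume (Ioo 0 b) = 0 := measure_mono_null hsub hae
  rw [Real.volume_Ioo, sub_zero, ENNReal.ofReal_eq_zero] at hzero
  exact (mem_Ioi.1 hb).not_ge hzero

end Curves

lemma continuous_abs_sub_coe (a : EReal) : Continuous fun b : ℝ => (a - (b : EReal)).abs := by
  induction a with
  | bot => simpa using continuous_const
  | top => simpa using continuous_const
  | coe a =>
    simp only [← EReal.coe_sub, EReal.abs_def]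
    exact ENNReal.continuous_ofReal.comp (by fun_prop)

lemma ereal_abs_eq_top_iff {a : EReal} : a.abs = ⊤ ↔ a = ⊤ ∨ a = ⊥ := by
  induction a <;> simp [EReal.abs_def]

lemma measurable_ereal_abs : Measurable EReal.abs :=
  EReal.measurable_of_measurable_real
    (by simpa only [EReal.abs_def, ← Real.norm_eq_abs] using measurable_norm.ennreal_ofReal)

lemma ereal_abs_coe_ennreal (a : ℝ≥0∞) : (a : EReal).abs = a := by
  induction a with
  | top => simp
  | coe a => rw [EReal.coe_nnreal_eq_coe_real, EReal.abs_def]; simp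

lemma eq_coe_of_abs_sub_eq_zero {a : EReal} {b : ℝ} (h : (a - (b : EReal)).abs = 0) :
    a = (b : EReal) := by
  induction a with
  | bot => simp at h
  | top => simp at h
  | coe a =>
    rw [← EReal.coe_sub, EReal.abs_eq_zero_iff, EReal.coe_eq_zero, sub_eq_zero] at h
    rw [h]

section QuasiEverywhere

variable {Q : Type*} [PseudoMetricSpace Q] [MeasurableSpace Q] [BorelSpace Q]
  {u : Q → EReal} {g : Q → ℝ≥0∞} {v : Q → ℝ}

/-- Compare `u (γ 0)` with `u (γ t) = v (γ t)` along parameters `t → 0` with `γ t ∉ {u ≠ v}`. -/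
lemma IsUpperGradient.eq_coe_start (hg : IsUpperGradient u g) (hv : Continuous v)
    (hN : MeasurableSet {x | u x ≠ (v x : EReal)}) {γ : Curve Q} (hγg : curveLint γ g ≠ ⊤)
    (hγN : curveLint γ ({x | u x ≠ (v x : EReal)}.indicator fun _ => ⊤) ≠ ⊤) :
    u (γ.toFun 0) = (v (γ.toFun 0) : EReal) := by
  have hcont : Tendsto (fun t => (u (γ.toFun 0) - (v (γ.toFun t) : EReal)).abs) (𝓝[>] 0)
      (𝓝 (u (γ.toFun 0) - (v (γ.toFun 0) : EReal)).abs) :=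
    ((continuous_abs_sub_coe _).tendsto _).comp ((hv.tendsto _).comp γ.tendsto_toFun)
  have hle : ∃ᶠ t in 𝓝[>] 0, (u (γ.toFun 0) - (v (γ.toFun t) : EReal)).abs ≤
      ∫⁻ τ in Icc 0 t, g (γ.toFun τ) := by
    refine ((Curve.frequently_notMem hN hγN).and_eventually
      (Ioc_mem_nhdsGT γ.len_pos)).mono fun t ⟨htN, ht⟩ => ?_
    rw [← not_not.1 htN]
    exact hg.2 (γ.initial ht)
  exact eq_coe_of_abs_sub_eq_zero <| nonpos_iff_eq_zero.1 <|
    le_of_tendsto_of_tendsto_of_frequently hcont (tendsto_curveLint_initial hγg) hle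

lemma IsUpperGradient.eq_coe_end (hg : IsUpperGradient u g) (hv : Continuous v)
    (hN : MeasurableSet {x | u x ≠ (v x : EReal)}) {γ : Curve Q} (hγg : curveLint γ g ≠ ⊤)
    (hγN : curveLint γ ({x | u x ≠ (v x : EReal)}.indicator fun _ => ⊤) ≠ ⊤) :
    u (γ.toFun γ.len) = (v (γ.toFun γ.len) : EReal) := by
  have h := hg.eq_coe_start hv hN (γ := γ.reverse) (by rwa [curveLint_reverse])
    (by rwa [curveLint_reverse])
  simpa only [Curve.reverse, sub_zero] using h

lemma IsUpperGradient.eq_coe_endpoints (hg : IsUpperGradient u g) (hv : Continuous v)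
    (hN : MeasurableSet {x | u x ≠ (v x : EReal)}) {ε : ℝ≥0∞} (hε : ε ≠ 0) {γ : Curve Q}
    (hγ : curveLint γ (fun x => ε * g x + {x | u x ≠ (v x : EReal)}.indicator (fun _ => ⊤) x) ≠ ⊤) :
    u (γ.toFun 0) = (v (γ.toFun 0) : EReal) ∧
      u (γ.toFun γ.len) = (v (γ.toFun γ.len) : EReal) := by
  have hγg : curveLint γ g ≠ ⊤ := by
    intro htop
    have hmul : ε * curveLint γ g ≤ curveLint γ fun x => ε * g x := lintegral_const_mul_le _ _
    rw [htop, ENNReal.mul_top hε] at hmul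
    exact hγ (top_le_iff.1 (hmul.trans (curveLint_mono γ fun _ => le_self_add)))
  have hγN : curveLint γ ({x | u x ≠ (v x : EReal)}.indicator fun _ => ⊤) ≠ ⊤ :=
    ne_top_of_le_ne_top hγ (curveLint_mono γ fun _ => le_add_self)
  exact ⟨hg.eq_coe_start hv hN hγg hγN, hg.eq_coe_end hv hN hγg hγN⟩

lemma IsUpperGradient.add_indicator_of_continuous (hg : IsUpperGradient u g) (hv : Continuous v)
    (hN : MeasurableSet {x | u x ≠ (v x : EReal)}) :
    IsUpperGradient (fun x => (v x : EReal))
      (fun x => g x + {x | u x ≠ (v x : EReal)}.indicator (fun _ => ⊤) x) := by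
  refine ⟨hg.1.add (measurable_const.indicator hN), fun γ => ?_⟩
  by_cases htop : curveLint γ
      (fun x => g x + {x | u x ≠ (v x : EReal)}.indicator (fun _ => ⊤) x) = ⊤
  · rw [htop]
    exact le_top
  · obtain ⟨h0, hlen⟩ := hg.eq_coe_endpoints hv hN one_ne_zero (γ := γ) (by simpa using htop)
    simp only [← h0, ← hlen]
    exact (hg.2 γ).trans (curveLint_mono γ fun _ => le_self_add)

lemma IsUpperGradient.indicator_ne_of_continuous (hg : IsUpperGradient u g) (hv : Continuous v)
    (hN : MeasurableSet {x | u x ≠ (v x : EReal)}) {ε : ℝ≥0∞} (hε : ε ≠ 0) :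
    IsUpperGradient (fun x => (({x | u x ≠ (v x : EReal)}.indicator (fun _ => 1) x : ℝ≥0∞) : EReal))
      (fun x => ε * g x + {x | u x ≠ (v x : EReal)}.indicator (fun _ => ⊤) x) := by
  refine ⟨(hg.1.const_mul _).add (measurable_const.indicator hN), fun γ => ?_⟩
  by_cases htop : curveLint γ
      (fun x => ε * g x + {x | u x ≠ (v x : EReal)}.indicator (fun _ => ⊤) x) = ⊤
  · rw [htop]
    exact le_top
  · obtain ⟨h0, hlen⟩ := hg.eq_coe_endpoints hv hN hε htop
    simp [h0, hlen]

end QuasiEverywhere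

namespace QBFL

section Lattice

variable {Q : Type*} [MeasurableSpace Q] {μ : Measure Q} (X : QBFL Q μ)

lemma nrmE_add_le (f g : Q → ℝ≥0∞) :
    X.nrmE (fun x => f x + g x) ≤ X.cc * (X.nrmE f + X.nrmE g) := by
  simpa only [nrmE, EReal.coe_ennreal_add] using X.nrm_triangle (fun x => f x) (fun x => g x)

lemma nrm_indicator_coe_lt_top {g : Q → ℝ≥0∞} (hg : X.nrmE g < ⊤) (B : Set Q) :
    X.nrm (B.indicator fun x => (g x : EReal)) < ⊤ :=
  (X.nrm_mono _ _ (ae_of_all _ fun x => by by_cases hx : x ∈ B <;> simp [hx])).trans_lt hg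

lemma nrmE_const_mul (a : ℝ≥0) (g : Q → ℝ≥0∞) :
    X.nrmE (fun x => a * g x) = a * X.nrmE g := by
  simpa only [nrmE, EReal.coe_ennreal_mul, NNReal.abs_eq, ENNReal.ofReal_coe_nnreal,
    EReal.coe_nnreal_eq_coe_real] using X.nrm_smul a (fun x => (g x : EReal))

lemma nrmE_indicator_of_null {N : Set Q} (hN : MeasurableSet N) (hμN : μ N = 0) (c : ℝ≥0∞) :
    X.nrmE (N.indicator fun _ => c) = 0 := by
  refine (X.nrm_eq_zero_iff _
    (measurable_coe_ennreal_ereal.comp (measurable_const.indicator hN))).2 ?_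
  filter_upwards [measure_eq_zero_iff_ae_notMem.1 hμN] with x hx
  simp [hx]

lemma measure_eq_zero_of_nrmE_indicator_top {A : Set Q} (hA : MeasurableSet A)
    (h : X.nrmE (A.indicator fun _ => ⊤) ≠ ⊤) : μ A = 0 := by
  have hdouble : X.nrmE (A.indicator fun _ => ⊤) = 2 * X.nrmE (A.indicator fun _ => ⊤) := by
    have heq : (fun x => ((2 : ℝ≥0) : ℝ≥0∞) * A.indicator (fun _ => (⊤ : ℝ≥0∞)) x) =
        A.indicator fun _ => ⊤ := by
      ext x
      by_cases hx : x ∈ A <;> simp [hx]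
    have h2 := X.nrmE_const_mul 2 (A.indicator fun _ => ⊤)
    rwa [heq] at h2
  have hzero : X.nrmE (A.indicator fun _ => ⊤) = 0 := by
    by_contra hne
    rw [two_mul] at hdouble
    exact (ENNReal.lt_add_right h hne).ne hdouble
  refine measure_eq_zero_iff_ae_notMem.2 ?_
  filter_upwards [(X.nrm_eq_zero_iff _
    (measurable_coe_ennreal_ereal.comp (measurable_const.indicator hA))).1 hzero] with x hx hxA
  simp [hxA] at hx

lemma ae_abs_ne_top {u : Q → EReal} (hu : Measurable u) (h : X.nrm u ≠ ⊤) :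
    ∀ᵐ x ∂μ, (u x).abs ≠ ⊤ := by
  have hA : MeasurableSet ((fun x => (u x).abs) ⁻¹' {⊤}) :=
    (measurable_ereal_abs.comp hu) (measurableSet_singleton _)
  have hle : ∀ᵐ x ∂μ,
      ((((fun x => (u x).abs) ⁻¹' {⊤}).indicator (fun _ => ⊤) x : ℝ≥0∞) : EReal).abs ≤
        (u x).abs := by
    refine ae_of_all _ fun x => ?_
    by_cases hx : (u x).abs = ⊤ <;> simp [hx]
  exact measure_eq_zero_iff_ae_notMem.1 (X.measure_eq_zero_of_nrmE_indicator_top hA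
    (ne_top_of_le_ne_top h (X.nrm_mono _ _ hle)))

end Lattice

section Newtonian

variable {Q : Type*} [MetricSpace Q] [MeasurableSpace Q] {μ : Measure Q} {X : QBFL Q μ}
  {u : Q → EReal} {g : Q → ℝ≥0∞} {v : Q → ℝ}

lemma newt_le_of_isUpperGradient (hg : IsUpperGradient u g) : X.newt u ≤ X.nrm u + X.nrmE g :=
  add_le_add le_rfl (iInf₂_le g hg)

lemma memN1.nrm_lt_top (hu : X.memN1 u) : X.nrm u < ⊤ := (ENNReal.add_lt_top.1 hu.2).1

lemma memN1.exists_isUpperGradient (hu : X.memN1 u) :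
    ∃ g, IsUpperGradient u g ∧ X.nrmE g < ⊤ := by
  simpa [iInf_lt_iff] using (ENNReal.add_lt_top.1 hu.2).2

lemma memN1.measurableSet_ne [OpensMeasurableSpace Q] (hu : X.memN1 u) (hv : Continuous v) :
    MeasurableSet {x | u x ≠ (v x : EReal)} :=
  (measurableSet_eq_fun hu.1 (measurable_coe_real_ereal.comp hv.measurable)).compl

lemma memN1.of_continuous_ae_eq [BorelSpace Q] (hu : X.memN1 u) (hv : Continuous v)
    (huv : ∀ᵐ x ∂μ, u x = (v x : EReal)) : X.memN1 fun x => (v x : EReal) := by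
  obtain ⟨g, hg, hgX⟩ := hu.exists_isUpperGradient
  have hN := hu.measurableSet_ne hv
  refine ⟨measurable_coe_real_ereal.comp hv.measurable,
    (newt_le_of_isUpperGradient (hg.add_indicator_of_continuous hv hN)).trans_lt
      (ENNReal.add_lt_top.2 ⟨?_, (X.nrmE_add_le _ _).trans_lt ?_⟩)⟩
  · refine (X.nrm_mono _ u ?_).trans_lt hu.nrm_lt_top
    filter_upwards [huv] with x hx
    rw [hx]
  · rw [X.nrmE_indicator_of_null hN huv, add_zero]
    exact ENNReal.mul_lt_top X.cc_lt_top hgX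

/-- The indicator function of `{u ≠ v}` has the upper gradients `ε g + ∞ · χ_{u ≠ v}`, whose norms
tend to zero with `ε`. -/
lemma memN1.cap_ne_eq_zero [BorelSpace Q] (hu : X.memN1 u) (hv : Continuous v)
    (huv : ∀ᵐ x ∂μ, u x = (v x : EReal)) : X.cap {x | u x ≠ (v x : EReal)} = 0 := by
  obtain ⟨g, hg, hgX⟩ := hu.exists_isUpperGradient
  have hN := hu.measurableSet_ne hv
  have hle (ε : ℝ≥0) (hε : ε ≠ 0) : X.cap {x | u x ≠ (v x : EReal)} ≤ X.cc * (ε * X.nrmE g) := by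
    have hnewt := (newt_le_of_isUpperGradient (X := X) (hg.indicator_ne_of_continuous hv hN
      (ENNReal.coe_ne_zero.2 hε))).trans (add_le_add
        (X.nrmE_indicator_of_null hN huv 1).le (X.nrmE_add_le _ _))
    rw [X.nrmE_indicator_of_null hN huv, add_zero, zero_add, X.nrmE_const_mul] at hnewt
    have hlt : X.cc * (ε * X.nrmE g) < ⊤ :=
      ENNReal.mul_lt_top X.cc_lt_top (ENNReal.mul_lt_top ENNReal.coe_lt_top hgX)
    refine (iInf₂_le _ ⟨⟨?_, hnewt.trans_lt hlt⟩, fun x hx => ?_⟩).trans hnewt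
    · exact measurable_coe_ennreal_ereal.comp (measurable_const.indicator hN)
    · simp [indicator_of_mem hx]
  have hlim : Tendsto (fun ε : ℝ≥0 => X.cc * (ε * X.nrmE g)) (𝓝[>] 0) (𝓝 0) := by
    have h := ENNReal.Tendsto.const_mul (ENNReal.Tendsto.mul_const
      ((ENNReal.continuous_coe.tendsto 0).mono_left (nhdsWithin_le_nhds (s := Ioi 0)))
      (Or.inr hgX.ne)) (Or.inr X.cc_lt_top.ne)
    simpa using h
  refine nonpos_iff_eq_zero.1 (ge_of_tendsto hlim ?_)
  filter_upwards [self_mem_nhdsWithin] with ε hε using hle ε (ne_of_gt hε)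

end Newtonian

end QBFL

/-! ### Doubling measures and Lebesgue points -/

section Measures

variable {Q : Type*} [PseudoMetricSpace Q] [MeasurableSpace Q] {μ : Measure Q}

lemma isOpenPosMeasure_of_forall_ball_pos (h : ∀ (x : Q) (r : ℝ), 0 < r → 0 < μ (ball x r)) :
    μ.IsOpenPosMeasure := by
  refine ⟨fun U hU ⟨x, hx⟩ => ?_⟩
  obtain ⟨r, hr, hrU⟩ := Metric.isOpen_iff.1 hU x hx
  exact ((h x r hr).trans_le (measure_mono hrU)).ne'

lemma isLocallyFiniteMeasure_of_forall_ball_ne_top (h : ∀ (x : Q) (r : ℝ), μ (ball x r) ≠ ⊤) :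
    IsLocallyFiniteMeasure μ :=
  ⟨fun x => ⟨ball x 1, ball_mem_nhds x one_pos, (h x 1).lt_top⟩⟩

/-- Disjoint balls of a fixed radius form a countable family, and by Vitali's covering lemma the
centres of a suitable such family are almost dense. -/
lemma secondCountableTopology_of_isOpenPosMeasure [OpensMeasurableSpace Q] (μ : Measure Q)
    [SFinite μ] [μ.IsOpenPosMeasure] : SecondCountableTopology Q := by
  refine Metric.secondCountable_of_almost_dense_set fun ε hε => ?_
  obtain ⟨U, -, hdisj, hcov⟩ := Vitali.exists_disjoint_subfamily_covering_enlargement_closedBall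
    (univ : Set Q) id (fun _ => ε / 5) (ε / 5) (fun _ _ => le_rfl) 5 (by norm_num)
  have hcount := Measure.countable_meas_pos_of_disjoint_iUnion (μ := μ)
    (As := fun a : U => closedBall (a : Q) (ε / 5)) (fun a => measurableSet_closedBall)
    (fun a b hab => hdisj a.2 b.2 (Subtype.coe_ne_coe.2 hab))
  have huniv : {a : U | 0 < μ (closedBall (a : Q) (ε / 5))} = univ :=
    eq_univ_of_forall fun a => measure_closedBall_pos μ _ (by positivity)
  rw [huniv, countable_univ_iff] at hcount
  refine ⟨U, hcount.to_set, fun x => ?_⟩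
  obtain ⟨b, hb, hsub⟩ := hcov x (mem_univ x)
  have hxb : x ∈ closedBall b (5 * (ε / 5)) := hsub (mem_closedBall_self (by positivity))
  rw [mem_closedBall, mul_div_cancel₀ _ (by norm_num)] at hxb
  exact ⟨b, hb, hxb⟩

end Measures

section DoublingMeasures

variable {Q : Type*} [MetricSpace Q] [MeasurableSpace Q] {μ : Measure Q}

lemma DimensionCond.exists_isDoublingWith {s : ℝ} {cs : ℝ≥0∞} (hdim : DimensionCond μ s cs)
    (hcs : 0 < cs) : ∃ C : ℝ≥0, IsDoublingWith μ C := by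
  set a : ℝ≥0∞ := min cs 1 * ENNReal.ofReal ((1 / 2) ^ s)
  have ha0 : a ≠ 0 := mul_ne_zero (by simp [hcs.ne'])
    (ENNReal.ofReal_pos.2 (by positivity)).ne'
  have hatop : a ≠ ⊤ := ENNReal.mul_ne_top (by simp) ENNReal.ofReal_ne_top
  refine ⟨a⁻¹.toNNReal, fun x r hr => ?_⟩
  rw [ENNReal.coe_toNNReal (ENNReal.inv_ne_top.2 ha0), ← ENNReal.mul_le_iff_le_inv ha0 hatop]
  refine le_trans ?_ (hdim x x r (2 * r) hr (by linarith) (mem_ball_self (by linarith)))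
  rw [div_mul_cancel_right₀ hr.ne', ← one_div]
  exact mul_le_mul_left (mul_le_mul_left (min_le_left _ _) _) _

lemma IsDoublingWith.measure_ball_le {C : ℝ≥0} (hC : IsDoublingWith μ C) {z w : Q} {ρ : ℝ}
    (hw : w ∈ ball z ρ) :
    μ (ball z ρ) ≤ (C : ℝ≥0∞) ^ 3 * μ (ball w (ρ / 4)) := by
  have hρ : 0 < ρ := dist_nonneg.trans_lt hw
  calc μ (ball z ρ) ≤ μ (ball w (2 * (2 * (2 * (ρ / 4))))) :=
        measure_mono (ball_subset_ball' (by rw [mem_ball'] at hw; linarith))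
    _ ≤ C * μ (ball w (2 * (2 * (ρ / 4)))) := hC _ _ (by positivity)
    _ ≤ C * (C * (C * μ (ball w (ρ / 4)))) := by
        gcongr
        exact (hC _ _ (by positivity)).trans (by gcongr; exact hC _ _ (by positivity))
    _ = _ := by ring

lemma IsDoublingWith.isUnifLocDoublingMeasure {C : ℝ≥0} (hC : IsDoublingWith μ C) :
    IsUnifLocDoublingMeasure μ := by
  refine ⟨⟨C ^ 2, ?_⟩⟩
  filter_upwards [self_mem_nhdsWithin] with ε (hε : 0 < ε) x
  calc μ (closedBall x (2 * ε)) ≤ μ (ball x (2 * (2 * ε))) :=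
        measure_mono (closedBall_subset_ball (by linarith))
    _ ≤ C * (C * μ (ball x ε)) :=
        (hC _ _ (by positivity)).trans (by gcongr; exact hC _ _ hε)
    _ = ((C ^ 2 : ℝ≥0) : ℝ≥0∞) * μ (ball x ε) := by push_cast; ring
    _ ≤ _ := by gcongr; exact ball_subset_closedBall

end DoublingMeasures

section LebesguePoints

variable {Q : Type*} [MetricSpace Q] [MeasurableSpace Q] {μ : Measure Q}

/-- `z` is a Lebesgue point of `u` along all geometric sequences of closed balls of ratio `1 / 2`,
in the weak sense that the averages of `u` converge to `u z`. -/
def IsDyadicLebesguePoint (μ : Measure Q) (u : Q → ℝ) (z : Q) : Prop :=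
  ∀ r : ℝ, 0 < r →
    Tendsto (fun k : ℕ => ⨍ y in closedBall z (r * (1 / 2) ^ k), u y ∂μ) atTop (𝓝 (u z))

lemma ae_isDyadicLebesguePoint [BorelSpace Q] [SecondCountableTopology Q]
    [IsUnifLocDoublingMeasure μ] [IsLocallyFiniteMeasure μ] {u : Q → ℝ}
    (hu : LocallyIntegrable u μ) : ∀ᵐ z ∂μ, IsDyadicLebesguePoint μ u z := by
  filter_upwards [IsUnifLocDoublingMeasure.ae_tendsto_average μ hu 1] with z hz r hr
  refine hz (fun _ => z) (fun k : ℕ => r * (1 / 2) ^ k) (tendsto_nhdsWithin_iff.2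
    ⟨?_, Eventually.of_forall fun k => mul_pos hr (by positivity)⟩)
    (Eventually.of_forall fun k => mem_closedBall_self (by positivity))
  simpa using (tendsto_pow_atTop_nhds_zero_of_lt_one (r := (1 / 2 : ℝ))
    (by norm_num) (by norm_num)).const_mul r

end LebesguePoints

lemma edist_average_le {α : Type*} [MeasurableSpace α] {μ : Measure α} {A B : Set α} (hAB : A ⊆ B)
    (hA : μ A ≠ 0) (hB : μ B ≠ ⊤) {K : ℝ≥0∞} (hK : μ B ≤ K * μ A) {u : α → ℝ}
    (hu : IntegrableOn u B μ) (a : ℝ) :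
    edist (⨍ y in A, u y ∂μ) a ≤ K * ENNReal.ofReal (⨍ y in B, |u y - a| ∂μ) := by
  have hAtop : μ A ≠ ⊤ := ne_top_of_le_ne_top hB (measure_mono hAB)
  have hsub : (⨍ y in A, u y ∂μ) - a = ⨍ y in A, (u y - a) ∂μ := by
    have hua : Integrable u (μ.restrict A) := hu.mono_set hAB
    refine .trans ?_ (integral_sub hua.to_average (integrableOn_const hAtop).to_average).symm
    exact congrArg _ (setAverage_const hA hAtop a).symm
  have hinv : (μ A)⁻¹ ≤ K * (μ B)⁻¹ := by
    have hB0 : μ B ≠ 0 := fun h => hA (measure_mono_null hAB h)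
    calc (μ A)⁻¹ = μ B / μ A * (μ B)⁻¹ := by
          rw [div_eq_mul_inv, mul_right_comm, ENNReal.mul_inv_cancel hB0 hB, one_mul]
      _ ≤ K * (μ B)⁻¹ := by gcongr; exact ENNReal.div_le_of_le_mul hK
  calc edist (⨍ y in A, u y ∂μ) a = ‖⨍ y in A, (u y - a) ∂μ‖ₑ := by
        rw [edist_eq_enorm_sub, hsub]
    _ ≤ ⨍⁻ y in A, ‖u y - a‖ₑ ∂μ := enorm_integral_le_lintegral_enorm _
    _ = (μ A)⁻¹ * ∫⁻ y in A, ‖u y - a‖ₑ ∂μ := by rw [setLAverage_eq, ENNReal.div_eq_inv_mul]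
    _ ≤ K * (μ B)⁻¹ * ∫⁻ y in B, ‖u y - a‖ₑ ∂μ :=
        mul_le_mul' hinv (lintegral_mono_set hAB)
    _ = K * ENNReal.ofReal (⨍ y in B, |u y - a| ∂μ) := by
        have hint : IntegrableOn (fun y => |u y - a|) B μ := (hu.sub (integrableOn_const hB)).abs
        simp only [ofReal_setAverage hint (ae_of_all _ fun _ => abs_nonneg _),
          Real.enorm_eq_ofReal_abs, ENNReal.div_eq_inv_mul, mul_assoc]

/-! ### Dyadic potentials -/

section Telescoping

variable {Q : Type*} [MetricSpace Q] [MeasurableSpace Q] {μ : Measure Q} {C : ℝ≥0}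
  {p cPI lam : ℝ} {u : Q → ℝ} {g : Q → ℝ≥0∞}

/-- The scaled mean `r (⨍_{B(z, λr)} g ^ p dμ) ^ (1 / p)`, which is, up to a constant, the
right-hand side of the Poincaré inequality on `B(z, r)`. -/
def scaledMean (μ : Measure Q) (p lam : ℝ) (g : Q → ℝ≥0∞) (z : Q) (r : ℝ) : ℝ≥0∞ :=
  ENNReal.ofReal r * (⨍⁻ y in ball z (lam * r), g y ^ p ∂μ) ^ (1 / p)

/-- The sum of the scaled means over the balls `B(z, 2⁻ᵏ r)`; it controls the oscillation of a
function with upper gradient `g` near `z`. -/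
def dyadicPotential (μ : Measure Q) (p lam : ℝ) (g : Q → ℝ≥0∞) (z : Q) (r : ℝ) : ℝ≥0∞ :=
  ∑' k : ℕ, scaledMean μ p lam g z (r * (1 / 2) ^ k)

lemma scaledMean_le_dyadicPotential (μ : Measure Q) (p lam : ℝ) (g : Q → ℝ≥0∞) (z : Q) (r : ℝ) :
    scaledMean μ p lam g z r ≤ dyadicPotential μ p lam g z r := by
  simpa [dyadicPotential] using
    ENNReal.le_tsum (f := fun k : ℕ => scaledMean μ p lam g z (r * (1 / 2) ^ k)) 0

lemma PoincareInequality.ofReal_average_le (hPI : PoincareInequality μ p cPI lam)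
    (hu : LocallyIntegrable u μ) (hg : IsUpperGradient (fun y => (u y : EReal)) g)
    {z : Q} {r : ℝ} (hr : 0 < r) :
    ENNReal.ofReal (⨍ y in ball z r, |u y - ⨍ w in ball z r, u w ∂μ| ∂μ) ≤
      ENNReal.ofReal (2 * cPI) * scaledMean μ p lam g z r := by
  refine (hPI z r hr u hu g hg).trans_eq ?_
  rw [scaledMean, setLAverage_eq, ENNReal.div_eq_inv_mul, show cPI * (2 * r) = 2 * cPI * r by ring,
    ENNReal.ofReal_mul' hr.le, mul_assoc (ENNReal.ofReal _)]

lemma edist_average_closedBall_average_ball_le [μ.IsOpenPosMeasure]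
    (hC : IsDoublingWith μ C) (hPI : PoincareInequality μ p cPI lam)
    (hfin : ∀ (x : Q) (r : ℝ), μ (ball x r) ≠ ⊤)
    (hu : ∀ (x : Q) (r : ℝ), IntegrableOn u (ball x r) μ)
    (hg : IsUpperGradient (fun y => (u y : EReal)) g) {z w : Q} {r t : ℝ} (hr : 0 < r)
    (ht : r / 4 ≤ t) (hsub : closedBall w t ⊆ ball z r) :
    edist (⨍ y in closedBall w t, u y ∂μ) (⨍ y in ball z r, u y ∂μ) ≤
      (C : ℝ≥0∞) ^ 3 * ENNReal.ofReal (2 * cPI) * scaledMean μ p lam g z r := by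
  have ht0 : 0 < t := by linarith
  have hcomp : μ (ball z r) ≤ (C : ℝ≥0∞) ^ 3 * μ (closedBall w t) :=
    (hC.measure_ball_le (hsub (mem_closedBall_self ht0.le))).trans <| by
      gcongr
      exact (ball_subset_ball ht).trans ball_subset_closedBall
  refine (edist_average_le hsub (measure_closedBall_pos μ w ht0).ne' (hfin z r) hcomp (hu z r)
    _).trans ?_
  rw [mul_assoc]
  gcongr
  exact hPI.ofReal_average_le (fun x => ⟨_, ball_mem_nhds x one_pos, hu x 1⟩) hg hr

lemma edist_average_closedBall_le [μ.IsOpenPosMeasure]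
    (hC : IsDoublingWith μ C) (hPI : PoincareInequality μ p cPI lam)
    (hfin : ∀ (x : Q) (r : ℝ), μ (ball x r) ≠ ⊤)
    (hu : ∀ (x : Q) (r : ℝ), IntegrableOn u (ball x r) μ)
    (hg : IsUpperGradient (fun y => (u y : EReal)) g) {z : Q} (hz : IsDyadicLebesguePoint μ u z)
    {r : ℝ} (hr : 0 < r) :
    edist (⨍ y in closedBall z (r / 2), u y ∂μ) (u z) ≤
      2 * ((C : ℝ≥0∞) ^ 3 * ENNReal.ofReal (2 * cPI)) * dyadicPotential μ p lam g z r := by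
  have hstep : ∀ k : ℕ, edist (⨍ y in closedBall z (r / 2 * (1 / 2) ^ k), u y ∂μ)
      (⨍ y in closedBall z (r / 2 * (1 / 2) ^ (k + 1)), u y ∂μ) ≤
      2 * ((C : ℝ≥0∞) ^ 3 * ENNReal.ofReal (2 * cPI)) *
        scaledMean μ p lam g z (r * (1 / 2) ^ k) := by
    intro k
    have hk : 0 < r * (1 / 2) ^ k := by positivity
    rw [mul_assoc, two_mul, pow_succ]
    refine (edist_triangle_right _ _ (⨍ y in ball z (r * (1 / 2) ^ k), u y ∂μ)).trans
      (add_le_add ?_ ?_) <;>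
    exact edist_average_closedBall_average_ball_le hC hPI hfin hu hg hk (by linarith)
      (closedBall_subset_ball (by linarith))
  simpa [dyadicPotential, ENNReal.tsum_mul_left] using
    edist_le_tsum_of_edist_le_of_tendsto₀ _ hstep (hz (r / 2) (half_pos hr))

lemma edist_le_dyadicPotential [μ.IsOpenPosMeasure]
    (hC : IsDoublingWith μ C) (hPI : PoincareInequality μ p cPI lam)
    (hfin : ∀ (x : Q) (r : ℝ), μ (ball x r) ≠ ⊤)
    (hu : ∀ (x : Q) (r : ℝ), IntegrableOn u (ball x r) μ)
    (hg : IsUpperGradient (fun y => (u y : EReal)) g) {x y : Q}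
    (hx : IsDyadicLebesguePoint μ u x) (hy : IsDyadicLebesguePoint μ u y) {δ : ℝ} (hδ : 0 < δ)
    (hxy : dist x y ≤ δ) :
    edist (u x) (u y) ≤ 4 * ((C : ℝ≥0∞) ^ 3 * ENNReal.ofReal (2 * cPI)) *
      (dyadicPotential μ p lam g x (4 * δ) + dyadicPotential μ p lam g y (4 * δ)) := by
  set κ : ℝ≥0∞ := (C : ℝ≥0∞) ^ 3 * ENNReal.ofReal (2 * cPI)
  set Φ : Q → ℝ≥0∞ := fun z => dyadicPotential μ p lam g z (4 * δ)
  set m : Q → ℝ := fun z => ⨍ w in closedBall z (4 * δ / 2), u w ∂μ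
  set M : ℝ := ⨍ w in ball x (4 * δ), u w ∂μ
  have hpoint : ∀ z, IsDyadicLebesguePoint μ u z → edist (m z) (u z) ≤ 2 * κ * Φ z := fun z hz =>
    edist_average_closedBall_le hC hPI hfin hu hg hz (by positivity)
  have hcentre : ∀ z, dist z x ≤ δ → edist (m z) M ≤ κ * Φ x := fun z hz =>
    (edist_average_closedBall_average_ball_le hC hPI hfin hu hg (by positivity) (by linarith)
      fun w hw => by
        rw [mem_closedBall] at hw
        exact mem_ball.2 (by linarith [dist_triangle w z x])).trans
      (by gcongr; exact scaledMean_le_dyadicPotential _ _ _ _ _ _)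
  calc edist (u x) (u y)
      ≤ edist (u x) (m x) + edist (m x) (m y) + edist (m y) (u y) := edist_triangle4 _ _ _ _
    _ ≤ edist (m x) (u x) + (edist (m x) M + edist (m y) M) + edist (m y) (u y) := by
        rw [edist_comm (u x)]
        gcongr
        exact edist_triangle_right _ _ _
    _ ≤ 2 * κ * Φ x + (κ * Φ x + κ * Φ x) + 2 * κ * Φ y := by
        gcongr
        exacts [hpoint x hx, hcentre x (by simpa using hδ.le), hcentre y (by rwa [dist_comm]),
          hpoint y hy]
    _ = 4 * κ * Φ x + 2 * κ * Φ y := by ring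
    _ ≤ 4 * κ * Φ x + 4 * κ * Φ y := by gcongr; norm_num
    _ = 4 * κ * (Φ x + Φ y) := by ring

end Telescoping

/-! ### Continuous extension from a dense set -/

section Oscillation

variable {Q : Type*} [PseudoMetricSpace Q] {Φ : Q → ℝ → ℝ≥0∞} {D : Set Q} {f : Q → ℝ}

/-- The values of `f` at two points of `D` at distance at most `δ` differ by at most the sum of the
values of `Φ` at these points and at scale `δ`. -/
def HasOscillationBoundOn (Φ : Q → ℝ → ℝ≥0∞) (D : Set Q) (f : Q → ℝ) : Prop :=
  ∀ x ∈ D, ∀ y ∈ D, ∀ δ : ℝ, 0 < δ → dist x y ≤ δ → edist (f x) (f y) ≤ Φ x δ + Φ y δ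

/-- Near every point, `Φ` is uniformly small at some scale. -/
def VanishesLocallyUniformly (Φ : Q → ℝ → ℝ≥0∞) : Prop :=
  ∀ x₀, ∀ ε : ℝ≥0∞, 0 < ε → ∃ δ : ℝ, 0 < δ ∧ ∀ᶠ z in 𝓝 x₀, Φ z δ < ε

lemma VanishesLocallyUniformly.const_mul_comp_mul (hΦ : VanishesLocallyUniformly Φ) {a : ℝ≥0∞}
    (ha : a ≠ ⊤) {b : ℝ} (hb : 0 < b) : VanishesLocallyUniformly fun z δ => a * Φ z (b * δ) := by
  intro x₀ ε hε
  obtain ⟨δ, hδ, h⟩ := hΦ x₀ (ε / a) (ENNReal.div_pos hε.ne' ha)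
  refine ⟨δ / b, div_pos hδ hb, h.mono fun z hz => ?_⟩
  simpa only [mul_div_cancel₀ δ hb.ne'] using ENNReal.mul_lt_of_lt_div' hz

lemma HasOscillationBoundOn.exists_tendsto_nhdsWithin (h : HasOscillationBoundOn Φ D f)
    (hD : Dense D) (hΦ : VanishesLocallyUniformly Φ) (x₀ : Q) :
    ∃ l, Tendsto f (𝓝[D] x₀) (𝓝 l) := by
  have : (𝓝[D] x₀).NeBot := mem_closure_iff_nhdsWithin_neBot.1 (hD x₀)
  refine cauchy_map_iff_exists_tendsto.1 (EMetric.cauchy_iff.2 ⟨NeBot.ne', fun ε hε => ?_⟩)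
  obtain ⟨δ, hδ, hsmall⟩ := hΦ x₀ (ε / 2) (ENNReal.half_pos hε.ne')
  refine ⟨f '' (D ∩ ({z | Φ z δ < ε / 2} ∩ ball x₀ (δ / 2))), image_mem_map
    (inter_mem_nhdsWithin D (inter_mem hsmall (ball_mem_nhds _ (half_pos hδ)))), ?_⟩
  rintro _ ⟨x, ⟨hx, hxΦ, hxb⟩, rfl⟩ _ ⟨y, ⟨hy, hyΦ, hyb⟩, rfl⟩
  rw [mem_ball] at hxb hyb
  calc edist (f x) (f y) ≤ Φ x δ + Φ y δ :=
        h x hx y hy δ hδ (by linarith [dist_triangle_right x y x₀])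
    _ < ε / 2 + ε / 2 := ENNReal.add_lt_add hxΦ hyΦ
    _ = ε := ENNReal.add_halves ε

lemma HasOscillationBoundOn.exists_continuous_eqOn (h : HasOscillationBoundOn Φ D f)
    (hD : Dense D) (hΦ : VanishesLocallyUniformly Φ) : ∃ v : Q → ℝ, Continuous v ∧ EqOn v f D := by
  refine ⟨extendFrom D f, continuous_extendFrom hD (h.exists_tendsto_nhdsWithin hD hΦ),
    fun x hx => ?_⟩
  obtain ⟨l, hl⟩ := h.exists_tendsto_nhdsWithin hD hΦ x
  rw [extendFrom_eq (hD x) hl]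
  exact tendsto_nhds_unique (hl.mono_left (pure_le_nhdsWithin hx)) (tendsto_pure_nhds f x)

end Oscillation

section ContinuousRepresentative

variable {Q : Type*} [MetricSpace Q] [MeasurableSpace Q] {μ : Measure Q} {C : ℝ≥0}
  {p cPI lam : ℝ} {g : Q → ℝ≥0∞}

lemma abs_coe_toReal_sub_coe_toReal_le (a b : EReal) :
    ((a.toReal : EReal) - (b.toReal : EReal)).abs ≤ (a - b).abs := by
  induction a <;> induction b <;> simp

lemma IsUpperGradient.coe_toReal {u : Q → EReal} (hg : IsUpperGradient u g) :
    IsUpperGradient (fun x => ((u x).toReal : EReal)) g :=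
  ⟨hg.1, fun γ => (abs_coe_toReal_sub_coe_toReal_le _ _).trans (hg.2 γ)⟩

lemma IsUpperGradient.comp_lipschitzWith_one {f : Q → ℝ}
    (hg : IsUpperGradient (fun x => (f x : EReal)) g) {φ : ℝ → ℝ} (hφ : LipschitzWith 1 φ) :
    IsUpperGradient (fun x => (φ (f x) : EReal)) g := by
  refine ⟨hg.1, fun γ => le_trans ?_ (hg.2 γ)⟩
  simp only [← EReal.coe_sub, EReal.abs_def]
  exact ENNReal.ofReal_le_ofReal (by simpa [Real.dist_eq] using hφ.dist_le_mul _ _)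

/-- The truncation of a real number to `[-k, k]`. -/
def truncate (k : ℕ) (t : ℝ) : ℝ := max (min t k) (-k)

lemma lipschitzWith_truncate (k : ℕ) : LipschitzWith 1 (truncate k) :=
  (LipschitzWith.id.min_const _).max_const _

lemma abs_truncate_le (k : ℕ) (t : ℝ) : |truncate k t| ≤ k :=
  abs_le.2 ⟨le_max_right _ _,
    max_le (min_le_right _ _) ((neg_nonpos.2 k.cast_nonneg).trans k.cast_nonneg)⟩

lemma truncate_eq_self {k : ℕ} {t : ℝ} (h : |t| ≤ k) : truncate k t = t := by
  rw [truncate, min_eq_left (abs_le.1 h).2, max_eq_left (abs_le.1 h).1]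

/-- A scale-dependent majorant for the oscillation of a function with upper gradient `g`. -/
def oscillationMajorant (μ : Measure Q) (p lam : ℝ) (g : Q → ℝ≥0∞) (C : ℝ≥0) (cPI : ℝ) (z : Q)
    (δ : ℝ) : ℝ≥0∞ :=
  4 * ((C : ℝ≥0∞) ^ 3 * ENNReal.ofReal (2 * cPI)) * dyadicPotential μ p lam g z (4 * δ)

lemma VanishesLocallyUniformly.oscillationMajorant
    (h : VanishesLocallyUniformly (dyadicPotential μ p lam g)) :
    VanishesLocallyUniformly (oscillationMajorant μ p lam g C cPI) :=
  h.const_mul_comp_mul (by finiteness) four_pos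

variable [BorelSpace Q] [SFinite μ] [μ.IsOpenPosMeasure]

/-- Truncation makes `f` locally integrable, so that the Poincaré inequality applies. -/
lemma IsUpperGradient.exists_hasOscillationBoundOn {f : Q → ℝ}
    (hg : IsUpperGradient (fun x => (f x : EReal)) g) (hf : Measurable f)
    (hfin : ∀ (x : Q) (r : ℝ), μ (ball x r) ≠ ⊤) (hC : IsDoublingWith μ C)
    (hPI : PoincareInequality μ p cPI lam) :
    ∃ D : Set Q, (∀ᵐ x ∂μ, x ∈ D) ∧
      HasOscillationBoundOn (oscillationMajorant μ p lam g C cPI) D f := by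
  have := secondCountableTopology_of_isOpenPosMeasure μ
  have := isLocallyFiniteMeasure_of_forall_ball_ne_top hfin
  have := hC.isUnifLocDoublingMeasure
  have hint : ∀ (k : ℕ) (x : Q) (r : ℝ), IntegrableOn (fun y => truncate k (f y)) (ball x r) μ :=
    fun k x r => Measure.integrableOn_of_bounded (hfin x r)
      ((lipschitzWith_truncate k).continuous.measurable.comp hf).aestronglyMeasurable
      (ae_of_all _ fun y => abs_truncate_le k (f y))
  refine ⟨{x | ∀ k : ℕ, IsDyadicLebesguePoint μ (fun y => truncate k (f y)) x},
    ae_all_iff.2 fun k => ae_isDyadicLebesguePoint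
      fun x => ⟨_, ball_mem_nhds x one_pos, hint k x 1⟩, fun x hx y hy δ hδ hxy => ?_⟩
  obtain ⟨k, hk⟩ := exists_nat_ge (max |f x| |f y|)
  have hosc := edist_le_dyadicPotential hC hPI hfin (hint k)
    (hg.comp_lipschitzWith_one (lipschitzWith_truncate k)) (hx k) (hy k) hδ hxy
  rwa [truncate_eq_self ((le_max_left _ _).trans hk),
    truncate_eq_self ((le_max_right _ _).trans hk), mul_add] at hosc

lemma IsUpperGradient.exists_continuous_ae_eq {u : Q → EReal} (hg : IsUpperGradient u g)
    (hu : Measurable u) (hu' : ∀ᵐ x ∂μ, (u x).abs ≠ ⊤)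
    (hfin : ∀ (x : Q) (r : ℝ), μ (ball x r) ≠ ⊤) (hC : IsDoublingWith μ C)
    (hPI : PoincareInequality μ p cPI lam)
    (hvan : VanishesLocallyUniformly (dyadicPotential μ p lam g)) :
    ∃ (v : Q → ℝ) (D : Set Q), Continuous v ∧ (∀ᵐ x ∂μ, u x = (v x : EReal)) ∧ Dense D ∧
      HasOscillationBoundOn (oscillationMajorant μ p lam g C cPI) D v := by
  obtain ⟨D, hD, hosc⟩ :=
    hg.coe_toReal.exists_hasOscillationBoundOn hu.ereal_toReal hfin hC hPI
  have hdense : Dense D := Measure.dense_of_ae hD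
  obtain ⟨v, hv, hvD⟩ := hosc.exists_continuous_eqOn hdense hvan.oscillationMajorant
  refine ⟨v, D, hv, ?_, hdense,
    fun x hx y hy => by simpa only [hvD hx, hvD hy] using hosc x hx y hy⟩
  filter_upwards [hD, hu'] with x hx hux
  rw [hvD hx]
  rw [Ne, ereal_abs_eq_top_iff, not_or] at hux
  exact (EReal.coe_toReal hux.1 hux.2).symm

end ContinuousRepresentative

/-! ### Decreasing rearrangements -/

lemma volume_restrict_Ioi_setOf_ofReal_lt (a : ℝ≥0∞) :
    volume.restrict (Ioi (0 : ℝ)) {τ | ENNReal.ofReal τ < a} = a := by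
  rw [Measure.restrict_apply (measurableSet_lt ENNReal.measurable_ofReal measurable_const)]
  by_cases ha : a = ⊤
  · simp [ha]
  have hIoo : {τ | ENNReal.ofReal τ < a} ∩ Ioi 0 = Ioo 0 a.toReal := by
    ext τ
    rw [mem_inter_iff, and_comm]
    exact and_congr_right fun hτ => ENNReal.ofReal_lt_iff_lt_toReal (le_of_lt hτ) ha
  rw [hIoo, Real.volume_Ioo, sub_zero, ENNReal.ofReal_toReal ha]

lemma lintegral_eq_lintegral_measure_ofReal_lt {α : Type*} [MeasurableSpace α] (ν : Measure α)
    [SFinite ν] {f : α → ℝ≥0∞} (hf : Measurable f) :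
    ∫⁻ x, f x ∂ν = ∫⁻ τ in Ioi (0 : ℝ), ν {x | ENNReal.ofReal τ < f x} := by
  have hS : MeasurableSet {q : α × ℝ | ENNReal.ofReal q.2 < f q.1} :=
    measurableSet_lt (ENNReal.measurable_ofReal.comp measurable_snd) (hf.comp measurable_fst)
  calc ∫⁻ x, f x ∂ν
      = ∫⁻ x, volume.restrict (Ioi (0 : ℝ)) {τ | ENNReal.ofReal τ < f x} ∂ν := by
        simp only [volume_restrict_Ioi_setOf_ofReal_lt]
    _ = ν.prod (volume.restrict (Ioi 0)) {q | ENNReal.ofReal q.2 < f q.1} :=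
        (Measure.prod_apply hS).symm
    _ = ∫⁻ τ in Ioi (0 : ℝ), ν {x | ENNReal.ofReal τ < f x} := Measure.prod_apply_symm hS

lemma lintegral_le_lintegral_of_measure_lt_le {α β : Type*} [MeasurableSpace α]
    [MeasurableSpace β] {ν₁ : Measure α} {ν₂ : Measure β} [SFinite ν₁] [SFinite ν₂]
    {f : α → ℝ≥0∞} {h : β → ℝ≥0∞} (hf : Measurable f) (hh : Measurable h)
    (hle : ∀ τ : ℝ≥0∞, ν₁ {x | τ < f x} ≤ ν₂ {y | τ < h y}) :
    ∫⁻ x, f x ∂ν₁ ≤ ∫⁻ y, h y ∂ν₂ := by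
  rw [lintegral_eq_lintegral_measure_ofReal_lt ν₁ hf,
    lintegral_eq_lintegral_measure_ofReal_lt ν₂ hh]
  exact lintegral_mono fun τ => hle _

section Rearrangement

variable {Q : Type*} [MeasurableSpace Q] {μ : Measure Q} {f : Q → EReal}

lemma decRearr_antitone (μ : Measure Q) (f : Q → EReal) : Antitone (decRearr μ f) :=
  fun _ _ hab => sInf_le_sInf fun _ hτ => le_trans hτ (ENNReal.ofReal_le_ofReal hab)

lemma measure_decRearr_lt_abs_le (μ : Measure Q) (f : Q → EReal) (t : ℝ) :
    μ {x | decRearr μ f t < (f x).abs} ≤ ENNReal.ofReal t := by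
  obtain ⟨w, hw, hwlim, hwS⟩ := exists_seq_tendsto_sInf
    (S := {τ : ℝ≥0∞ | μ {x | τ < (f x).abs} ≤ ENNReal.ofReal t}) ⟨⊤, by simp⟩
    (OrderBot.bddBelow _)
  have hmono : Monotone fun n => {x | w n < (f x).abs} := fun a b hab x hx => (hw hab).trans_lt hx
  calc μ {x | decRearr μ f t < (f x).abs} ≤ μ (⋃ n, {x | w n < (f x).abs}) :=
        measure_mono fun x hx => mem_iUnion.2 (hwlim.eventually (gt_mem_nhds hx)).exists
    _ = ⨆ n, μ {x | w n < (f x).abs} := hmono.directed_le.measure_iUnion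
    _ ≤ ENNReal.ofReal t := iSup_le hwS

lemma lt_decRearr_of_ofReal_lt {t : ℝ} {σ : ℝ≥0∞}
    (h : ENNReal.ofReal t < μ {x | σ < (f x).abs}) : σ < decRearr μ f t := by
  by_contra! hle
  have hsub : {x | σ < (f x).abs} ⊆ {x | decRearr μ f t < (f x).abs} := fun x hx => hle.trans_lt hx
  exact h.not_ge ((measure_mono hsub).trans (measure_decRearr_lt_abs_le μ f t))

lemma min_le_volume_lt_decRearr (f : Q → EReal) (m : ℝ) (σ : ℝ≥0∞) :
    min (ENNReal.ofReal m) (μ {x | σ < (f x).abs}) ≤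
      volume ({t | σ < decRearr μ f t} ∩ Ioo 0 m) := by
  set b : ℝ≥0∞ := min (ENNReal.ofReal m) (μ {x | σ < (f x).abs})
  have hb : b ≠ ⊤ := ne_top_of_le_ne_top ENNReal.ofReal_ne_top (min_le_left _ _)
  have hsub : Ioo 0 b.toReal ⊆ {t | σ < decRearr μ f t} ∩ Ioo 0 m := by
    rintro t ⟨ht0, htb⟩
    have ht : ENNReal.ofReal t < b := (ENNReal.ofReal_lt_iff_lt_toReal ht0.le hb).2 htb
    exact ⟨lt_decRearr_of_ofReal_lt (ht.trans_le (min_le_right _ _)), ht0,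
      (ENNReal.ofReal_lt_ofReal_iff_of_nonneg ht0.le).1 (ht.trans_le (min_le_left _ _))⟩
  simpa [ENNReal.ofReal_toReal hb] using measure_mono (μ := volume) hsub

lemma inv_mul_min_le_inv_mul_min {a b : ℝ≥0∞} (hab : a ≤ b) (ha : a ≠ 0) (ha' : a ≠ ⊤)
    (c : ℝ≥0∞) : b⁻¹ * min b c ≤ a⁻¹ * min a c := by
  rcases le_total a c with hac | hca
  · rw [min_eq_left hac, ENNReal.inv_mul_cancel ha ha', mul_comm, ← div_eq_mul_inv]
    exact (ENNReal.div_le_div_right (min_le_left _ _) _).trans ENNReal.div_self_le_one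
  · rw [min_eq_right hca]
    gcongr
    exact min_le_right _ _

lemma setLAverage_rpow_le_setLAverage_decRearr {E : Set Q} (hE : MeasurableSet E)
    (hEtop : μ E ≠ ⊤) (hf : Measurable f) {m : ℝ} (hm : 0 < m) (hmE : ENNReal.ofReal m ≤ μ E)
    {p : ℝ} (hp : 0 < p) :
    ⨍⁻ y in E, (f y).abs ^ p ∂μ ≤ ⨍⁻ t in Ioo 0 m, decRearr μ f t ^ p ∂volume := by
  have : IsFiniteMeasure (μ.restrict E) := ⟨by simpa using hEtop.lt_top⟩
  refine lintegral_le_lintegral_of_measure_lt_le ((measurable_ereal_abs.comp hf).pow_const p)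
    ((decRearr_antitone μ f).measurable.pow_const p) fun τ => ?_
  have hlt : ∀ a : ℝ≥0∞, τ < a ^ p ↔ τ ^ (1 / p) < a := fun a => by
    rw [one_div, ENNReal.rpow_inv_lt_iff hp]
  simp only [hlt, Measure.smul_apply, smul_eq_mul, univ_inter,
    Measure.restrict_apply' hE, Measure.restrict_apply' measurableSet_Ioo, Real.volume_Ioo,
    sub_zero]
  calc (μ E)⁻¹ * μ ({x | τ ^ (1 / p) < (f x).abs} ∩ E)
      ≤ (μ E)⁻¹ * min (μ E) (μ {x | τ ^ (1 / p) < (f x).abs}) := by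
        gcongr
        exact le_min (measure_mono inter_subset_right) (measure_mono inter_subset_left)
    _ ≤ (ENNReal.ofReal m)⁻¹ * min (ENNReal.ofReal m) (μ {x | τ ^ (1 / p) < (f x).abs}) :=
        inv_mul_min_le_inv_mul_min hmE (by simpa using hm) ENNReal.ofReal_ne_top _
    _ ≤ (ENNReal.ofReal m)⁻¹ *
          volume ({t | τ ^ (1 / p) < decRearr μ f t} ∩ Ioo 0 m) := by
        gcongr
        exact min_le_volume_lt_decRearr f m _

end Rearrangement

/-! ### Decay of dyadic potentials -/

section Decay

variable {Q : Type*} [MetricSpace Q] [MeasurableSpace Q] {μ : Measure Q}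
  {p s lam A R : ℝ} {g : Q → ℝ≥0∞}

/-- Lower Ahlfors regularity, with exponent `s` and constant `A`, of the balls of radius at most `R`
centred in `B(x₀, R)`. -/
def IsLowerAhlforsOn (μ : Measure Q) (A s : ℝ) (x₀ : Q) (R : ℝ) : Prop :=
  ∀ z ∈ ball x₀ R, ∀ r : ℝ, 0 < r → r ≤ R → ENNReal.ofReal (A * r ^ s) ≤ μ (ball z r)

lemma DimensionCond.exists_isLowerAhlforsOn {cs : ℝ≥0∞} (hdim : DimensionCond μ s cs)
    (hcs : 0 < cs) {x₀ : Q} (hR : 0 < R) (hpos : 0 < μ (ball x₀ R)) (hfin : μ (ball x₀ R) ≠ ⊤) :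
    ∃ A > 0, IsLowerAhlforsOn μ A s x₀ R := by
  set K : ℝ≥0∞ := min cs 1 * μ (ball x₀ R)
  have hK : K ≠ ⊤ := ENNReal.mul_ne_top (by simp) hfin
  have hK0 : 0 < K.toReal := ENNReal.toReal_pos (by simp [K, hcs.ne', hpos.ne']) hK
  refine ⟨K.toReal / R ^ s, by positivity, fun z hz r hr hrR => ?_⟩
  calc ENNReal.ofReal (K.toReal / R ^ s * r ^ s)
      = K * ENNReal.ofReal ((r / R) ^ s) := by
        rw [Real.div_rpow hr.le hR.le, div_mul_comm, mul_comm, ENNReal.ofReal_mul hK0.le,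
          ENNReal.ofReal_toReal hK]
    _ = min cs 1 * ENNReal.ofReal ((r / R) ^ s) * μ (ball x₀ R) := mul_right_comm _ _ _
    _ ≤ cs * ENNReal.ofReal ((r / R) ^ s) * μ (ball x₀ R) := by gcongr; exact min_le_left _ _
    _ ≤ μ (ball z r) := hdim x₀ z r R hr hrR hz

lemma scaledMean_le_of_setLAverage_le {z : Q} {r : ℝ} {I : ℝ≥0∞} (hA : 0 < A) (hr : 0 < r)
    (hlam : 0 < lam) (hp : 0 < p)
    (h : ⨍⁻ y in ball z (lam * r), g y ^ p ∂μ ≤ I / ENNReal.ofReal (A * (lam * r) ^ s)) :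
    scaledMean μ p lam g z r ≤
      ENNReal.ofReal ((A * lam ^ s) ^ (-(1 / p)) * r ^ (1 - s / p)) * I ^ (1 / p) := by
  have hpow : r * (A * (lam * r) ^ s) ^ (-(1 / p)) =
      (A * lam ^ s) ^ (-(1 / p)) * r ^ (1 - s / p) := by
    rw [Real.mul_rpow hlam.le hr.le, ← mul_assoc, Real.mul_rpow (by positivity) (by positivity),
      ← Real.rpow_mul hr.le, mul_left_comm, sub_eq_add_neg, Real.rpow_add hr, Real.rpow_one,
      mul_neg, mul_one_div]
  calc scaledMean μ p lam g z r
      ≤ ENNReal.ofReal r * (I / ENNReal.ofReal (A * (lam * r) ^ s)) ^ (1 / p) := by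
        rw [scaledMean]
        gcongr
    _ = ENNReal.ofReal (r * (A * (lam * r) ^ s) ^ (-(1 / p))) * I ^ (1 / p) := by
        rw [ENNReal.div_eq_inv_mul, ENNReal.mul_rpow_of_nonneg _ _ (by positivity),
          ENNReal.inv_rpow, ← ENNReal.rpow_neg, ENNReal.ofReal_rpow_of_pos (by positivity),
          ENNReal.ofReal_mul hr.le, mul_assoc]
    _ = _ := by rw [hpow]

lemma rpow_mul_half_pow {r : ℝ} (hr : 0 ≤ r) (e : ℝ) (k : ℕ) :
    (r * (1 / 2) ^ k) ^ e = r ^ e * ((1 / 2 : ℝ) ^ e) ^ k := by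
  rw [Real.mul_rpow hr (by positivity), Real.rpow_pow_comm (by norm_num)]

lemma mul_half_pow_le {r : ℝ} (hr : 0 ≤ r) (k : ℕ) : r * (1 / 2) ^ k ≤ r :=
  mul_le_of_le_one_right hr (pow_le_one₀ (by norm_num) (by norm_num))

lemma IsLowerAhlforsOn.exists_dyadicPotential_le {x₀ : Q} (hA : IsLowerAhlforsOn μ A s x₀ R)
    (hA0 : 0 < A) (hlam : 0 < lam) (hp : 0 < p) (hsp : s < p)
    (hg : ∫⁻ y in ball x₀ (2 * R), g y ^ p ∂μ ≠ ⊤) :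
    ∃ C : ℝ≥0, ∀ z ∈ ball x₀ R, ∀ r : ℝ, 0 < r → lam * r ≤ R →
      dyadicPotential μ p lam g z r ≤ C * ENNReal.ofReal (r ^ (1 - s / p)) := by
  set J : ℝ≥0∞ := ∫⁻ y in ball x₀ (2 * R), g y ^ p ∂μ
  set L : ℝ≥0∞ := ENNReal.ofReal ((A * lam ^ s) ^ (-(1 / p))) * J ^ (1 / p)
  set q : ℝ≥0∞ := ENNReal.ofReal ((1 / 2) ^ (1 - s / p))
  have hq : q < 1 := ENNReal.ofReal_lt_one.2
    (Real.rpow_lt_one (by norm_num) (by norm_num) (sub_pos.2 ((div_lt_one hp).2 hsp)))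
  have hC : L * (1 - q)⁻¹ ≠ ⊤ := ENNReal.mul_ne_top (by finiteness)
    (ENNReal.inv_ne_top.2 (tsub_pos_of_lt hq).ne')
  refine ⟨(L * (1 - q)⁻¹).toNNReal, fun z hz r hr hrR => ?_⟩
  rw [ENNReal.coe_toNNReal hC]
  have hterm : ∀ k : ℕ, scaledMean μ p lam g z (r * (1 / 2) ^ k) ≤
      L * ENNReal.ofReal (r ^ (1 - s / p)) * q ^ k := by
    intro k
    have hk : lam * (r * (1 / 2) ^ k) ≤ R :=
      (mul_le_mul_of_nonneg_left (mul_half_pow_le hr.le k) hlam.le).trans hrR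
    have hsub : ball z (lam * (r * (1 / 2) ^ k)) ⊆ ball x₀ (2 * R) :=
      ball_subset_ball' (by linarith [mem_ball.1 hz])
    have havg : ⨍⁻ y in ball z (lam * (r * (1 / 2) ^ k)), g y ^ p ∂μ ≤
        J / ENNReal.ofReal (A * (lam * (r * (1 / 2) ^ k)) ^ s) := by
      rw [setLAverage_eq]
      exact ENNReal.div_le_div (lintegral_mono_set hsub) (hA z hz _ (by positivity) hk)
    calc scaledMean μ p lam g z (r * (1 / 2) ^ k)
        ≤ _ := scaledMean_le_of_setLAverage_le hA0 (by positivity) hlam hp havg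
      _ = L * ENNReal.ofReal (r ^ (1 - s / p)) * q ^ k := by
        rw [rpow_mul_half_pow hr.le, ← ENNReal.ofReal_pow (by positivity),
          ENNReal.ofReal_mul (by positivity), ENNReal.ofReal_mul (by positivity)]
        ring
  calc dyadicPotential μ p lam g z r
      ≤ ∑' k : ℕ, L * ENNReal.ofReal (r ^ (1 - s / p)) * q ^ k := ENNReal.tsum_le_tsum hterm
    _ = L * (1 - q)⁻¹ * ENNReal.ofReal (r ^ (1 - s / p)) := by
        rw [ENNReal.tsum_mul_left, ENNReal.tsum_geometric]
        ring

lemma vanishesLocallyUniformly_dyadicPotential_of_le_rpow (hlam : 0 < lam) {θ : ℝ} (hθ : 0 < θ)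
    (h : ∀ x₀ : Q, ∃ R > 0, ∃ C : ℝ≥0, ∀ z ∈ ball x₀ R, ∀ r : ℝ, 0 < r → lam * r ≤ R →
      dyadicPotential μ p lam g z r ≤ C * ENNReal.ofReal (r ^ θ)) :
    VanishesLocallyUniformly (dyadicPotential μ p lam g) := by
  intro x₀ ε hε
  obtain ⟨R, hR, C, hC⟩ := h x₀
  have hlim : Tendsto (fun r : ℝ => (C : ℝ≥0∞) * ENNReal.ofReal (r ^ θ)) (𝓝[>] 0) (𝓝 0) := by
    have hcont : Continuous fun r : ℝ => (C : ℝ≥0∞) * ENNReal.ofReal (r ^ θ) :=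
      (ENNReal.continuous_const_mul ENNReal.coe_ne_top).comp
        (ENNReal.continuous_ofReal.comp (Real.continuous_rpow_const hθ.le))
    simpa [Real.zero_rpow hθ.ne'] using (hcont.tendsto 0).mono_left nhdsWithin_le_nhds
  obtain ⟨r, hrε, hr0, hrR⟩ := ((hlim.eventually (gt_mem_nhds hε)).and
    (Ioo_mem_nhdsGT (div_pos hR hlam))).exists
  refine ⟨r, hr0, eventually_of_mem (ball_mem_nhds x₀ hR) fun z hz => ?_⟩
  exact (hC z hz r hr0 (by rw [mul_comm]; exact ((lt_div_iff₀ hlam).1 hrR).le)).trans_lt hrε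

lemma vanishesLocallyUniformly_dyadicPotential_of_summable
    (h : ∀ x₀ : Q, ∃ r > 0, ∃ F : ℕ → ℝ≥0∞, ∑' k, F k ≠ ⊤ ∧
      ∀ᶠ z in 𝓝 x₀, ∀ k : ℕ, scaledMean μ p lam g z (r * (1 / 2) ^ k) ≤ F k) :
    VanishesLocallyUniformly (dyadicPotential μ p lam g) := by
  intro x₀ ε hε
  obtain ⟨r, hr, F, hF, hle⟩ := h x₀
  obtain ⟨n, hn⟩ := ((ENNReal.tendsto_sum_nat_add F hF).eventually (gt_mem_nhds hε)).exists
  refine ⟨r * (1 / 2) ^ n, by positivity, hle.mono fun z hz => lt_of_le_of_lt ?_ hn⟩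
  refine ENNReal.tsum_le_tsum fun k => ?_
  simpa only [pow_add, mul_assoc, mul_comm ((1 / 2 : ℝ) ^ k)] using hz (k + n)

/-- The one-dimensional counterpart of the dyadic potential, in which balls of radius `2⁻ᵏ` are
replaced by intervals of length `m 2⁻ᵏˢ`. -/
def dyadicSeries (h : ℝ → ℝ≥0∞) (m p s : ℝ) : ℝ≥0∞ :=
  ∑' k : ℕ, ENNReal.ofReal (((1 / 2 : ℝ) ^ (1 - s / p)) ^ k) *
    (∫⁻ t in Ioo 0 (m * ((1 / 2 : ℝ) ^ s) ^ k), h t ^ p) ^ (1 / p)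

lemma setLAverage_rpow_le_lintegral_decRearr_div [OpensMeasurableSpace Q] {B : Set Q}
    (hB : MeasurableSet B) (hBtop : μ B ≠ ⊤) (hg : Measurable g) {z : Q} {r : ℝ}
    (hsub : ball z r ⊆ B) {m : ℝ} (hm : 0 < m) (hmE : ENNReal.ofReal m ≤ μ (ball z r))
    (hp : 0 < p) :
    ⨍⁻ y in ball z r, g y ^ p ∂μ ≤
      (∫⁻ t in Ioo 0 m, decRearr μ (B.indicator fun x => (g x : EReal)) t ^ p) /
        ENNReal.ofReal m := by
  have h := setLAverage_rpow_le_setLAverage_decRearr measurableSet_ball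
    (ne_top_of_le_ne_top hBtop (measure_mono hsub)) (hg.coe_ereal_ennreal.indicator hB) hm hmE hp
  rw [setLAverage_eq (μ := volume), Real.volume_Ioo, sub_zero] at h
  refine le_trans (le_of_eq ?_) h
  refine setLAverage_congr_fun measurableSet_ball fun y hy => ?_
  simp only [indicator_of_mem (hsub hy), ereal_abs_coe_ennreal]

lemma IsLowerAhlforsOn.exists_scaledMean_le [OpensMeasurableSpace Q] {x₀ : Q}
    (hA : IsLowerAhlforsOn μ A s x₀ R) (hA0 : 0 < A) (hR : 0 < R)
    (hfin : μ (ball x₀ (2 * R)) ≠ ⊤) (hlam : 0 < lam) (hp : 0 < p) (hg : Measurable g)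
    (hser : ∀ m : ℝ, 0 < m → m ≤ μ.real (ball x₀ (2 * R)) →
      dyadicSeries (decRearr μ ((ball x₀ (2 * R)).indicator fun x => (g x : EReal))) m p s ≠ ⊤) :
    ∃ r > 0, ∃ F : ℕ → ℝ≥0∞, ∑' k, F k ≠ ⊤ ∧
      ∀ z ∈ ball x₀ R, ∀ k : ℕ, scaledMean μ p lam g z (r * (1 / 2) ^ k) ≤ F k := by
  set h : ℝ → ℝ≥0∞ := decRearr μ ((ball x₀ (2 * R)).indicator fun x => (g x : EReal))
  have hm : A * R ^ s ≤ μ.real (ball x₀ (2 * R)) :=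
    (ENNReal.ofReal_le_iff_le_toReal hfin).1 ((hA x₀ (mem_ball_self hR) R hR le_rfl).trans
      (measure_mono (ball_subset_ball (by linarith))))
  set r : ℝ := R / lam
  have hr : 0 < r := div_pos hR hlam
  have hlr : lam * r = R := mul_div_cancel₀ R hlam.ne'
  set c : ℝ≥0∞ := ENNReal.ofReal ((A * lam ^ s) ^ (-(1 / p)) * r ^ (1 - s / p))
  refine ⟨r, hr, fun k => c * (ENNReal.ofReal (((1 / 2 : ℝ) ^ (1 - s / p)) ^ k) *
    (∫⁻ t in Ioo 0 (A * R ^ s * ((1 / 2 : ℝ) ^ s) ^ k), h t ^ p) ^ (1 / p)), ?_, fun z hz k => ?_⟩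
  · rw [ENNReal.tsum_mul_left]
    exact ENNReal.mul_ne_top ENNReal.ofReal_ne_top (hser (A * R ^ s) (by positivity) hm)
  · have hk : lam * (r * (1 / 2) ^ k) = R * (1 / 2) ^ k := by rw [← mul_assoc, hlr]
    have hkR := mul_half_pow_le hR.le k
    have havg := setLAverage_rpow_le_lintegral_decRearr_div measurableSet_ball hfin hg
      (ball_subset_ball' (by linarith [mem_ball.1 hz]) :
        ball z (lam * (r * (1 / 2) ^ k)) ⊆ ball x₀ (2 * R)) (by positivity)
      (hA z hz (lam * (r * (1 / 2) ^ k)) (by positivity) (hk.trans_le hkR)) hp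
    refine (scaledMean_le_of_setLAverage_le hA0 (by positivity) hlam hp havg).trans_eq ?_
    rw [hk, rpow_mul_half_pow hR.le, rpow_mul_half_pow hr.le, ← mul_assoc, ← mul_assoc,
      ENNReal.ofReal_mul (by positivity), mul_assoc]

end Decay

/-! ### Convergence of dyadic series -/

lemma tsum_indicator_le_ofReal_mul {α : Type*} {S : ℕ → Set α} {f : α → ℝ≥0∞} {x : α} {c : ℝ}
    (hc : 0 ≤ c) (hS : ∀ k : ℕ, x ∈ S k → (k : ℝ) + 1 ≤ c) :
    ∑' k, (S k).indicator f x ≤ ENNReal.ofReal c * f x := by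
  have hzero : ∀ k ∉ Finset.range ⌊c⌋₊, (S k).indicator f x = 0 := fun k hk =>
    indicator_of_notMem (fun hx => hk (Finset.mem_range.2
      (Nat.le_floor (by exact_mod_cast hS k hx)))) _
  calc ∑' k, (S k).indicator f x
      = ∑ k ∈ Finset.range ⌊c⌋₊, (S k).indicator f x := tsum_eq_sum hzero
    _ ≤ ∑ _k ∈ Finset.range ⌊c⌋₊, f x := Finset.sum_le_sum fun k _ => indicator_le_self _ _ _
    _ = ENNReal.ofReal ⌊c⌋₊ * f x := by simp
    _ ≤ ENNReal.ofReal c * f x := by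
        gcongr
        exact Nat.floor_le hc

lemma add_one_div_two_le_one_add_log {s m M t : ℝ} {k : ℕ} (hs : 1 ≤ s) (hmM : m ≤ M)
    (ht0 : 0 < t) (ht : t < m * ((1 / 2 : ℝ) ^ s) ^ k) :
    ((k : ℝ) + 1) / 2 ≤ 1 + Real.log (M / t) := by
  have hpow : (2 : ℝ) ^ (s * k) ≤ M / t := by
    rw [le_div_iff₀ ht0, mul_comm]
    rw [one_div, Real.inv_rpow two_pos.le, inv_pow, ← div_eq_mul_inv, lt_div_iff₀ (by positivity),
      ← Real.rpow_mul_natCast two_pos.le] at ht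
    exact ht.le.trans hmM
  have hlog : s * k * Real.log 2 ≤ Real.log (M / t) := by
    rw [← Real.log_rpow two_pos]
    exact Real.log_le_log (by positivity) hpow
  have hk : (k : ℝ) * (1 / 2) ≤ s * k * Real.log 2 := by
    gcongr
    · exact le_mul_of_one_le_left (by positivity) hs
    · linarith [Real.log_two_gt_d9]
  linarith

section Series

variable {h : ℝ → ℝ≥0∞} {m M p s α : ℝ}

lemma dyadicSeries_one_one_ne_top_of_zygmund (hh : Measurable h) (hm : 0 ≤ m) (hmM : m ≤ M)
    (hα : 1 ≤ α)
    (hfin : ∫⁻ t in Ioo 0 M, h t * ENNReal.ofReal ((1 + Real.log (M / t)) ^ α) ≠ ⊤) :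
    dyadicSeries h m 1 1 ≠ ⊤ := by
  have hseries : dyadicSeries h m 1 1 =
      ∫⁻ t in Ioo 0 M, ∑' k : ℕ, (Ioo 0 (m * ((1 / 2 : ℝ) ^ (1 : ℝ)) ^ k)).indicator h t := by
    rw [lintegral_tsum fun k => (hh.indicator measurableSet_Ioo).aemeasurable, dyadicSeries]
    refine tsum_congr fun k => ?_
    have hsub : Ioo 0 (m * ((1 / 2 : ℝ) ^ (1 : ℝ)) ^ k) ⊆ Ioo 0 M :=
      Ioo_subset_Ioo_right (by simpa using (mul_half_pow_le hm k).trans hmM)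
    rw [setLIntegral_indicator measurableSet_Ioo, inter_eq_left.2 hsub]
    simp
  rw [hseries]
  refine ne_top_of_le_ne_top (ENNReal.mul_ne_top (ENNReal.ofReal_ne_top (r := 2)) hfin) ?_
  rw [← lintegral_const_mul' _ _ ENNReal.ofReal_ne_top]
  refine setLIntegral_mono' measurableSet_Ioo fun t ht => ?_
  have hlog : 0 ≤ Real.log (M / t) := Real.log_nonneg ((one_le_div ht.1).2 ht.2.le)
  have hself : 1 + Real.log (M / t) ≤ (1 + Real.log (M / t)) ^ α :=
    Real.self_le_rpow_of_one_le (by linarith) hα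
  calc ∑' k : ℕ, (Ioo 0 (m * ((1 / 2 : ℝ) ^ (1 : ℝ)) ^ k)).indicator h t
      ≤ ENNReal.ofReal (2 * (1 + Real.log (M / t)) ^ α) * h t :=
        tsum_indicator_le_ofReal_mul (by positivity) fun k hk => by
          linarith [add_one_div_two_le_one_add_log le_rfl hmM hk.1 hk.2]
    _ = ENNReal.ofReal 2 * (h t * ENNReal.ofReal ((1 + Real.log (M / t)) ^ α)) := by
        rw [ENNReal.ofReal_mul two_pos.le, mul_assoc, mul_comm (h t)]

lemma setLIntegral_rpow_le_inv_mul_of_le {β : Type*} [MeasurableSpace β] {ν : Measure β}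
    {S : Set β} (hS : MeasurableSet S) {f w : β → ℝ≥0∞} {c : ℝ≥0∞} (hc : c ≠ 0) (hc' : c ≠ ⊤)
    (hs : 0 < s) (hw : ∀ x ∈ S, c ≤ w x) :
    (∫⁻ x in S, f x ^ s ∂ν) ^ (1 / s) ≤ c⁻¹ * (∫⁻ x in S, (f x * w x) ^ s ∂ν) ^ (1 / s) := by
  have hle : c ^ s * ∫⁻ x in S, f x ^ s ∂ν ≤ ∫⁻ x in S, (f x * w x) ^ s ∂ν := by
    rw [← lintegral_const_mul' _ _ (ENNReal.rpow_ne_top_of_nonneg hs.le hc')]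
    refine setLIntegral_mono' hS fun x hx => ?_
    rw [mul_comm, ← ENNReal.mul_rpow_of_nonneg _ _ hs.le]
    gcongr
    exact hw x hx
  rw [← ENNReal.mul_le_iff_le_inv hc hc']
  calc c * (∫⁻ x in S, f x ^ s ∂ν) ^ (1 / s)
      = (c ^ s * ∫⁻ x in S, f x ^ s ∂ν) ^ (1 / s) := by
        rw [ENNReal.mul_rpow_of_nonneg _ _ (by positivity), ← ENNReal.rpow_mul,
          mul_one_div_cancel hs.ne', ENNReal.rpow_one]
    _ ≤ _ := by gcongr

lemma setLIntegral_rpow_le_of_zygmund (hm : 0 ≤ m) (hmM : m ≤ M) (hs : 1 ≤ s) (hα : 0 ≤ α)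
    (k : ℕ) :
    (∫⁻ t in Ioo 0 (m * ((1 / 2 : ℝ) ^ s) ^ k), h t ^ s) ^ (1 / s) ≤
      ENNReal.ofReal (2 ^ α * (((k + 1 : ℕ) : ℝ) ^ α)⁻¹) *
        (∫⁻ t in Ioo 0 M, (h t * ENNReal.ofReal ((1 + Real.log (M / t)) ^ α)) ^ s) ^ (1 / s) := by
  have hs0 : 0 < s := by linarith
  have hq : ((1 / 2 : ℝ) ^ s) ^ k ≤ 1 :=
    pow_le_one₀ (by positivity) (Real.rpow_le_one (by norm_num) (by norm_num) hs0.le)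
  have hw : (0 : ℝ) < (((k + 1 : ℕ) : ℝ) / 2) ^ α := by positivity
  have hconst : (2 : ℝ) ^ α * (((k + 1 : ℕ) : ℝ) ^ α)⁻¹ = ((((k + 1 : ℕ) : ℝ) / 2) ^ α)⁻¹ := by
    rw [Real.div_rpow (by positivity) two_pos.le, inv_div, div_eq_mul_inv]
  rw [hconst, ENNReal.ofReal_inv_of_pos hw]
  refine (setLIntegral_rpow_le_inv_mul_of_le (s := s) measurableSet_Ioo
    (w := fun t => ENNReal.ofReal ((1 + Real.log (M / t)) ^ α))
    (ENNReal.ofReal_ne_zero_iff.2 hw) ENNReal.ofReal_ne_top hs0 fun t ht => ?_).trans ?_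
  · gcongr
    simpa using add_one_div_two_le_one_add_log hs hmM ht.1 ht.2
  · gcongr
    exact (mul_le_of_le_one_right hm hq).trans hmM

lemma dyadicSeries_self_ne_top_of_zygmund (hm : 0 ≤ m) (hmM : m ≤ M) (hs : 1 ≤ s) (hα : 1 < α)
    (hfin : ∫⁻ t in Ioo 0 M, (h t * ENNReal.ofReal ((1 + Real.log (M / t)) ^ α)) ^ s ≠ ⊤) :
    dyadicSeries h m s s ≠ ⊤ := by
  have hs0 : 0 < s := by linarith
  have hsum : Summable fun k : ℕ => (2 : ℝ) ^ α * (((k + 1 : ℕ) : ℝ) ^ α)⁻¹ :=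
    ((summable_nat_add_iff 1).2 (Real.summable_nat_rpow_inv.2 hα)).mul_left _
  simp only [dyadicSeries, div_self hs0.ne', sub_self, Real.rpow_zero, one_pow, ENNReal.ofReal_one,
    one_mul]
  refine ne_top_of_le_ne_top ?_ (ENNReal.tsum_le_tsum
    (setLIntegral_rpow_le_of_zygmund hm hmM hs (by linarith)))
  rw [ENNReal.tsum_mul_right]
  exact ENNReal.mul_ne_top hsum.tsum_ofReal_ne_top
    (ENNReal.rpow_ne_top_of_nonneg (by positivity) hfin)

lemma rpow_tsum_le_tsum_rpow (f : ℕ → ℝ≥0∞) {r : ℝ} (hr0 : 0 < r) (hr1 : r ≤ 1) :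
    (∑' j, f j) ^ r ≤ ∑' j, f j ^ r := by
  have hfin : ∀ n : ℕ, (∑ j ∈ Finset.range n, f j) ^ r ≤ ∑ j ∈ Finset.range n, f j ^ r := by
    intro n
    induction n with
    | zero => simp [hr0]
    | succ n ih =>
      rw [Finset.sum_range_succ, Finset.sum_range_succ]
      exact (ENNReal.rpow_add_le_add_rpow _ _ hr0.le hr1).trans (add_le_add ih le_rfl)
  exact le_of_tendsto (((ENNReal.continuous_rpow_const (y := r)).tendsto _).comp
    (ENNReal.tendsto_nat_tsum f)) (Eventually.of_forall fun n => (hfin n).trans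
      (ENNReal.sum_le_tsum _))

lemma Ioo_subset_iUnion_Ico {a : ℕ → ℝ} {b : ℝ} (ha : Tendsto a atTop (𝓝 b)) :
    Ioo b (a 0) ⊆ ⋃ j, Ico (a (j + 1)) (a j) := by
  intro t ht
  have hex : ∃ j, a j ≤ t := (ha.eventually (ge_mem_nhds ht.1)).exists
  classical
  have hpos : Nat.find hex ≠ 0 := fun h0 => ((Nat.find_eq_zero hex).1 h0).not_gt ht.2
  obtain ⟨j, hj⟩ := Nat.exists_eq_succ_of_ne_zero hpos
  have hle : a (j + 1) ≤ t := by simpa only [hj] using Nat.find_spec hex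
  exact mem_iUnion.2 ⟨j, hle, not_le.1 (Nat.find_min hex (by omega))⟩

lemma setLIntegral_Ioo_rpow_le_tsum (hh : Antitone h) {a : ℕ → ℝ} (ha0 : ∀ i, 0 ≤ a i)
    (ha : Tendsto a atTop (𝓝 0)) (hp : 1 ≤ p) :
    (∫⁻ t in Ioo 0 (a 0), h t ^ p) ^ (1 / p) ≤
      ∑' j, ENNReal.ofReal (a j ^ (1 / p)) * h (a (j + 1)) := by
  have hp0 : 0 < p := by linarith
  have hsum : ∫⁻ t in Ioo 0 (a 0), h t ^ p ≤ ∑' j, ENNReal.ofReal (a j) * h (a (j + 1)) ^ p := by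
    refine (lintegral_mono_set (Ioo_subset_iUnion_Ico ha)).trans
      ((lintegral_iUnion_le _ _).trans (ENNReal.tsum_le_tsum fun j => ?_))
    calc ∫⁻ t in Ico (a (j + 1)) (a j), h t ^ p
        ≤ ∫⁻ _t in Ico (a (j + 1)) (a j), h (a (j + 1)) ^ p :=
          setLIntegral_mono' measurableSet_Ico fun t ht => ENNReal.rpow_le_rpow (hh ht.1) hp0.le
      _ = ENNReal.ofReal (a j - a (j + 1)) * h (a (j + 1)) ^ p := by
          rw [setLIntegral_const, Real.volume_Ico, mul_comm]
      _ ≤ ENNReal.ofReal (a j) * h (a (j + 1)) ^ p := by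
          gcongr
          linarith [ha0 (j + 1)]
  calc (∫⁻ t in Ioo 0 (a 0), h t ^ p) ^ (1 / p)
      ≤ (∑' j, ENNReal.ofReal (a j) * h (a (j + 1)) ^ p) ^ (1 / p) := by gcongr
    _ ≤ ∑' j, (ENNReal.ofReal (a j) * h (a (j + 1)) ^ p) ^ (1 / p) :=
        rpow_tsum_le_tsum_rpow _ (by positivity) ((div_le_one hp0).2 hp)
    _ = ∑' j, ENNReal.ofReal (a j ^ (1 / p)) * h (a (j + 1)) := by
        refine tsum_congr fun j => ?_
        rw [ENNReal.mul_rpow_of_nonneg _ _ (by positivity), ← ENNReal.rpow_mul,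
          mul_one_div_cancel hp0.ne', ENNReal.rpow_one,
          ENNReal.ofReal_rpow_of_nonneg (ha0 j) (by positivity)]

-- A discrete Hardy inequality: write `c ^ k = c⁻¹ ^ j * c ^ (j + k)` and sum over `k` first.
lemma tsum_pow_mul_tsum_add_le {c : ℝ≥0∞} (hc : c ≠ 0) (hc' : c ≠ ⊤) (b : ℕ → ℝ≥0∞) :
    ∑' k : ℕ, c ^ k * ∑' j, b (j + k) ≤ (1 - c⁻¹)⁻¹ * ∑' i, c ^ i * b i := by
  have hsplit : ∀ j k : ℕ, c ^ k * b (j + k) = c⁻¹ ^ j * (c ^ (j + k) * b (j + k)) := by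
    intro j k
    rw [← mul_assoc, pow_add, ← mul_assoc, ← mul_pow, ENNReal.inv_mul_cancel hc hc', one_pow,
      one_mul]
  calc ∑' k : ℕ, c ^ k * ∑' j, b (j + k)
      = ∑' j : ℕ, c⁻¹ ^ j * ∑' k : ℕ, c ^ (j + k) * b (j + k) := by
        simp only [← ENNReal.tsum_mul_left, hsplit]
        rw [ENNReal.tsum_comm]
    _ ≤ ∑' j : ℕ, c⁻¹ ^ j * ∑' i, c ^ i * b i := by
        refine ENNReal.tsum_le_tsum fun j => mul_le_mul_right ?_ _
        exact ENNReal.tsum_comp_le_tsum_of_injective (add_right_injective j) fun i => c ^ i * b i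
    _ = (1 - c⁻¹)⁻¹ * ∑' i, c ^ i * b i := by
        rw [ENNReal.tsum_mul_right, ENNReal.tsum_geometric]

lemma ofReal_rpow_mul_le_setLIntegral_Ico (hh : Antitone h) {x q e : ℝ} (hx : 0 < x) (hq : 0 < q)
    (he : e ≤ 1) :
    ENNReal.ofReal (x ^ e * (1 - q)) * h x ≤
      ∫⁻ t in Ico (x * q) x, h t * ENNReal.ofReal (t ^ (e - 1)) := by
  have hxe : x ^ e * (1 - q) = x ^ (e - 1) * (x - x * q) := by
    rw [Real.rpow_sub_one hx.ne']
    field_simp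
  calc ENNReal.ofReal (x ^ e * (1 - q)) * h x
      = ∫⁻ _t in Ico (x * q) x, h x * ENNReal.ofReal (x ^ (e - 1)) := by
        rw [setLIntegral_const, Real.volume_Ico, mul_assoc, ← ENNReal.ofReal_mul (by positivity),
          hxe, mul_comm]
    _ ≤ ∫⁻ t in Ico (x * q) x, h t * ENNReal.ofReal (t ^ (e - 1)) := by
        refine setLIntegral_mono' measurableSet_Ico fun t ht => ?_
        refine mul_le_mul' (hh ht.2.le) (ENNReal.ofReal_le_ofReal ?_)
        exact Real.rpow_le_rpow_of_nonpos ((by positivity : 0 < x * q).trans_le ht.1) ht.2.le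
          (by linarith)

lemma tsum_ofReal_rpow_mul_le_lorentz (hh : Antitone h) {q e : ℝ} (hm : 0 < m) (hq : 0 < q)
    (hq1 : q < 1) (he : e ≤ 1) :
    ∑' i : ℕ, ENNReal.ofReal ((m * q ^ i) ^ e) * h (m * q ^ i) ≤
      ENNReal.ofReal (1 - q)⁻¹ * ∫⁻ t in Ioi (0 : ℝ), h t * ENNReal.ofReal (t ^ (e - 1)) := by
  have hanti : Antitone fun i : ℕ => m * q ^ i := fun i j hij =>
    mul_le_mul_of_nonneg_left (pow_le_pow_of_le_one hq.le hq1.le hij) hm.le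
  have hterm : ∀ i : ℕ, ENNReal.ofReal ((m * q ^ i) ^ e) * h (m * q ^ i) ≤
      ENNReal.ofReal (1 - q)⁻¹ *
        ∫⁻ t in Ico (m * q ^ (i + 1)) (m * q ^ i), h t * ENNReal.ofReal (t ^ (e - 1)) := by
    intro i
    have hq' : 0 < 1 - q := sub_pos.2 hq1
    have hle := ofReal_rpow_mul_le_setLIntegral_Ico hh (by positivity : 0 < m * q ^ i) hq he
    rw [mul_comm (_ ^ e), ENNReal.ofReal_mul hq'.le, mul_assoc, mul_assoc m, ← pow_succ] at hle
    rw [ENNReal.ofReal_inv_of_pos hq']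
    exact (ENNReal.mul_le_iff_le_inv (by simpa using hq') ENNReal.ofReal_ne_top).1 hle
  have hdisj : Pairwise (Function.onFun Disjoint fun i : ℕ => Ico (m * q ^ (i + 1)) (m * q ^ i)) :=
    hanti.pairwise_disjoint_on_Ico_succ
  refine (ENNReal.tsum_le_tsum hterm).trans ?_
  rw [ENNReal.tsum_mul_left, ← lintegral_iUnion (fun i => measurableSet_Ico) hdisj]
  gcongr
  exact iUnion_subset fun i t ht => (by positivity : 0 < m * q ^ (i + 1)).trans_le ht.1

lemma half_rpow_pow_mul_rpow (hm : 0 < m) (hs : s ≠ 0) (i : ℕ) :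
    ((1 / 2 : ℝ) ^ (1 - s / p)) ^ i * (m * ((1 / 2 : ℝ) ^ s) ^ i) ^ (1 / p) =
      2 * m ^ (1 / p - 1 / s) * (m * ((1 / 2 : ℝ) ^ s) ^ (i + 1)) ^ (1 / s) := by
  have hpow : ∀ (e : ℝ) (n : ℕ), (m * ((1 / 2 : ℝ) ^ s) ^ n) ^ e =
      m ^ e * ((1 / 2 : ℝ) ^ (s * e)) ^ n := fun e n => by
    rw [Real.mul_rpow hm.le (by positivity), ← Real.rpow_pow_comm (by positivity),
      ← Real.rpow_mul (by norm_num)]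
  have hleft : ((1 / 2 : ℝ) ^ (1 - s / p)) ^ i * ((1 / 2 : ℝ) ^ (s * (1 / p))) ^ i =
      (1 / 2) ^ i := by
    rw [← mul_pow, ← Real.rpow_add (by norm_num), mul_one_div, sub_add_cancel, Real.rpow_one]
  rw [hpow, hpow, mul_one_div_cancel hs, Real.rpow_one, mul_left_comm, hleft, pow_succ,
    Real.rpow_sub hm]
  field_simp

lemma tsum_ofReal_pow_mul_ne_top_of_lorentz (hh : Antitone h) (hm : 0 < m) (hs : 1 ≤ s)
    (hfin : ∫⁻ t in Ioi (0 : ℝ), h t * ENNReal.ofReal (t ^ (1 / s - 1)) ≠ ⊤) :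
    ∑' i : ℕ, ENNReal.ofReal ((1 / 2) ^ (1 - s / p)) ^ i *
      (ENNReal.ofReal ((m * ((1 / 2 : ℝ) ^ s) ^ i) ^ (1 / p)) *
        h (m * ((1 / 2 : ℝ) ^ s) ^ (i + 1))) ≠ ⊤ := by
  have hs0 : 0 < s := by linarith
  have hterm : ∀ i : ℕ, ENNReal.ofReal ((1 / 2) ^ (1 - s / p)) ^ i *
      (ENNReal.ofReal ((m * ((1 / 2 : ℝ) ^ s) ^ i) ^ (1 / p)) *
        h (m * ((1 / 2 : ℝ) ^ s) ^ (i + 1))) =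
      ENNReal.ofReal (2 * m ^ (1 / p - 1 / s)) *
        (ENNReal.ofReal ((m * ((1 / 2 : ℝ) ^ s) ^ (i + 1)) ^ (1 / s)) *
          h (m * ((1 / 2 : ℝ) ^ s) ^ (i + 1))) := by
    intro i
    rw [← mul_assoc, ← mul_assoc, ← ENNReal.ofReal_pow (by positivity),
      ← ENNReal.ofReal_mul (by positivity), ← ENNReal.ofReal_mul (by positivity),
      half_rpow_pow_mul_rpow hm hs0.ne']
  simp only [hterm, ENNReal.tsum_mul_left]
  refine ENNReal.mul_ne_top ENNReal.ofReal_ne_top (ne_top_of_le_ne_top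
    (ENNReal.mul_ne_top ENNReal.ofReal_ne_top hfin)
    ((ENNReal.tsum_comp_le_tsum_of_injective (add_left_injective 1) _).trans
      (tsum_ofReal_rpow_mul_le_lorentz hh hm (by positivity) ?_ ?_)))
  · exact Real.rpow_lt_one (by norm_num) (by norm_num) hs0
  · exact (div_le_one hs0).2 hs

lemma dyadicSeries_ne_top_of_lorentz (hh : Antitone h) (hm : 0 < m) (hp : 1 ≤ p) (hps : p < s)
    (hfin : ∫⁻ t in Ioi (0 : ℝ), h t * ENNReal.ofReal (t ^ (1 / s - 1)) ≠ ⊤) :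
    dyadicSeries h m p s ≠ ⊤ := by
  have hp0 : 0 < p := by linarith
  set q : ℝ := (1 / 2) ^ s
  have hq0 : 0 < q := by positivity
  have hq1 : q < 1 := Real.rpow_lt_one (by norm_num) (by norm_num) (hp0.trans hps)
  set ϑ : ℝ≥0∞ := ENNReal.ofReal ((1 / 2) ^ (1 - s / p))
  have hϑ1 : 1 < ϑ := ENNReal.one_lt_ofReal.2 (Real.one_lt_rpow_of_pos_of_lt_one_of_neg
    (by norm_num) (by norm_num) (sub_neg.2 ((one_lt_div hp0).2 hps)))
  set b : ℕ → ℝ≥0∞ := fun i =>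
    ENNReal.ofReal ((m * q ^ i) ^ (1 / p)) * h (m * q ^ (i + 1))
  have hint : ∀ k : ℕ, (∫⁻ t in Ioo 0 (m * q ^ k), h t ^ p) ^ (1 / p) ≤ ∑' j, b (j + k) := by
    intro k
    have hlim : Tendsto (fun j => m * q ^ (j + k)) atTop (𝓝 0) := by
      simpa using ((tendsto_add_atTop_iff_nat k).2
        (tendsto_pow_atTop_nhds_zero_of_lt_one hq0.le hq1)).const_mul m
    simpa only [b, zero_add, add_right_comm] using
      setLIntegral_Ioo_rpow_le_tsum hh (fun j => by positivity) hlim hp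
  have hbsum : ∑' i, ϑ ^ i * b i ≠ ⊤ :=
    tsum_ofReal_pow_mul_ne_top_of_lorentz hh hm (hp.trans hps.le) hfin
  have hgeom : (1 - ϑ⁻¹)⁻¹ ≠ ⊤ :=
    ENNReal.inv_ne_top.2 (tsub_pos_of_lt (ENNReal.inv_lt_one.2 hϑ1)).ne'
  refine ne_top_of_le_ne_top (ENNReal.mul_ne_top hgeom hbsum) (le_trans ?_
    (tsum_pow_mul_tsum_add_le (one_pos.trans hϑ1).ne' ENNReal.ofReal_ne_top b))
  refine ENNReal.tsum_le_tsum fun k => ?_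
  rw [ENNReal.ofReal_pow (by positivity)]
  gcongr
  exact hint k

end Series

/-! ### Embeddings and local Hölder continuity -/

section Embeddings

variable {Q : Type*} [MetricSpace Q] [MeasurableSpace Q] {μ : Measure Q} {X : QBFL Q μ}
  {p s α r : ℝ} {g : Q → ℝ≥0∞}

lemma EmbedsLpLoc.setLIntegral_rpow_ne_top (hX : EmbedsLpLoc X p) (hp : 0 < p)
    (hg : X.nrmE g < ⊤) (hr : 0 < r) (x : Q) : ∫⁻ y in ball x r, g y ^ p ∂μ ≠ ⊤ := by
  obtain ⟨c, hc, h⟩ := hX x r hr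
  have hlt := (h fun x => (g x : EReal)).trans_lt
    (ENNReal.mul_lt_top hc (X.nrm_indicator_coe_lt_top hg _))
  simp only [ereal_abs_coe_ennreal] at hlt
  intro htop
  rw [htop, ENNReal.top_rpow_of_pos (by positivity)] at hlt
  exact hlt.ne rfl

lemma EmbedsZygmundLoc.setLIntegral_decRearr_ne_top (hX : EmbedsZygmundLoc X s α) (hs : 0 < s)
    (hg : X.nrmE g < ⊤) (hr : 0 < r) (x : Q) :
    ∫⁻ t in Ioo 0 (μ.real (ball x r)),
      (decRearr μ ((ball x r).indicator fun y => (g y : EReal)) t *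
        ENNReal.ofReal ((1 + Real.log (μ.real (ball x r) / t)) ^ α)) ^ s ≠ ⊤ := by
  obtain ⟨c, hc, h⟩ := hX x r hr
  have hlt := (h fun x => (g x : EReal)).trans_lt
    (ENNReal.mul_lt_top hc (X.nrm_indicator_coe_lt_top hg _))
  intro htop
  rw [Measure.real] at htop
  rw [zygNorm, htop, ENNReal.top_rpow_of_pos (by positivity)] at hlt
  exact hlt.ne rfl

lemma EmbedsLorentzLoc.setLIntegral_decRearr_ne_top (hX : EmbedsLorentzLoc X s) (hs : 0 < s)
    (hg : X.nrmE g < ⊤) (hr : 0 < r) (x : Q) :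
    ∫⁻ t in Ioi (0 : ℝ), decRearr μ ((ball x r).indicator fun y => (g y : EReal)) t *
      ENNReal.ofReal (t ^ (1 / s - 1)) ≠ ⊤ := by
  obtain ⟨c, hc, h⟩ := hX x r hr
  have hlt := (h fun x => (g x : EReal)).trans_lt
    (ENNReal.mul_lt_top hc (X.nrm_indicator_coe_lt_top hg _))
  intro htop
  rw [lorentzNorm, htop, ENNReal.mul_top (by simpa using hs)] at hlt
  exact hlt.ne rfl

end Embeddings

section Vanishing

variable {Q : Type*} [MetricSpace Q] [MeasurableSpace Q] {μ : Measure Q} {X : QBFL Q μ}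
  {p s lam : ℝ} {cs : ℝ≥0∞} {g : Q → ℝ≥0∞}

lemma EmbedsLpLoc.exists_dyadicPotential_le (hX : EmbedsLpLoc X p)
    (hball : ∀ (x : Q) (r : ℝ), 0 < r → 0 < μ (ball x r) ∧ μ (ball x r) < ⊤)
    (hdim : DimensionCond μ s cs) (hcs : 0 < cs) (hp : 0 < p) (hsp : s < p) (hlam : 0 < lam)
    (hg : X.nrmE g < ⊤) (x₀ : Q) :
    ∃ R > 0, ∃ C : ℝ≥0, ∀ z ∈ ball x₀ R, ∀ r : ℝ, 0 < r → lam * r ≤ R →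
      dyadicPotential μ p lam g z r ≤ C * ENNReal.ofReal (r ^ (1 - s / p)) := by
  obtain ⟨hpos, hfin⟩ := hball x₀ 1 one_pos
  obtain ⟨A, hA0, hA⟩ := hdim.exists_isLowerAhlforsOn hcs one_pos hpos hfin.ne
  exact ⟨1, one_pos, hA.exists_dyadicPotential_le hA0 hlam hp hsp
    (hX.setLIntegral_rpow_ne_top hp hg (by norm_num) x₀)⟩

lemma vanishesLocallyUniformly_dyadicPotential_of_dyadicSeries [OpensMeasurableSpace Q]
    (hball : ∀ (x : Q) (r : ℝ), 0 < r → 0 < μ (ball x r) ∧ μ (ball x r) < ⊤)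
    (hdim : DimensionCond μ s cs) (hcs : 0 < cs) (hp : 0 < p) (hlam : 0 < lam)
    (hg : Measurable g)
    (hser : ∀ (x : Q) (r : ℝ), 0 < r → ∀ m : ℝ, 0 < m → m ≤ μ.real (ball x r) →
      dyadicSeries (decRearr μ ((ball x r).indicator fun y => (g y : EReal))) m p s ≠ ⊤) :
    VanishesLocallyUniformly (dyadicPotential μ p lam g) := by
  refine vanishesLocallyUniformly_dyadicPotential_of_summable fun x₀ => ?_
  obtain ⟨hpos, hfin⟩ := hball x₀ 1 one_pos
  obtain ⟨A, hA0, hA⟩ := hdim.exists_isLowerAhlforsOn hcs one_pos hpos hfin.ne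
  obtain ⟨r, hr, F, hF, hle⟩ := hA.exists_scaledMean_le hA0 one_pos
    (hball x₀ (2 * 1) (by norm_num)).2.ne hlam hp hg (hser x₀ (2 * 1) (by norm_num))
  exact ⟨r, hr, F, hF, eventually_of_mem (ball_mem_nhds x₀ one_pos) hle⟩

lemma vanishesLocallyUniformly_dyadicPotential_of_embeds [OpensMeasurableSpace Q]
    (hball : ∀ (x : Q) (r : ℝ), 0 < r → 0 < μ (ball x r) ∧ μ (ball x r) < ⊤)
    (hdim : DimensionCond μ s cs) (hcs : 0 < cs) (hp : 1 ≤ p) (hlam : 0 < lam)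
    (hcase :
      (s < p ∧ EmbedsLpLoc X p) ∨
      (p = 1 ∧ s = 1 ∧ ∃ α : ℝ, 1 ≤ α ∧ EmbedsZygmundLoc X s α) ∨
      (1 < p ∧ p = s ∧ ∃ α : ℝ, 1 < α ∧ EmbedsZygmundLoc X s α) ∨
      (p < s ∧ EmbedsLorentzLoc X s))
    (hg : Measurable g) (hgX : X.nrmE g < ⊤) :
    VanishesLocallyUniformly (dyadicPotential μ p lam g) := by
  have hp0 : 0 < p := by linarith
  rcases hcase with ⟨hsp, hX⟩ | hcase
  · exact vanishesLocallyUniformly_dyadicPotential_of_le_rpow hlam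
      (sub_pos.2 ((div_lt_one hp0).2 hsp))
      (hX.exists_dyadicPotential_le hball hdim hcs hp0 hsp hlam hgX)
  refine vanishesLocallyUniformly_dyadicPotential_of_dyadicSeries hball hdim hcs hp0 hlam hg
    fun x r hr m hm hmM => ?_
  rcases hcase with ⟨rfl, rfl, α, hα, hX⟩ | ⟨-, rfl, α, hα, hX⟩ | ⟨hps, hX⟩
  · exact dyadicSeries_one_one_ne_top_of_zygmund (decRearr_antitone μ _).measurable hm.le hmM hα
      (by simpa only [ENNReal.rpow_one] using hX.setLIntegral_decRearr_ne_top one_pos hgX hr x)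
  · exact dyadicSeries_self_ne_top_of_zygmund hm.le hmM hp hα
      (hX.setLIntegral_decRearr_ne_top hp0 hgX hr x)
  · exact dyadicSeries_ne_top_of_lorentz (decRearr_antitone μ _) hm hp hps
      (hX.setLIntegral_decRearr_ne_top (hp0.trans hps) hgX hr x)

end Vanishing

section Holder

lemma holderOnWith_of_dense {α β : Type*} [PseudoEMetricSpace α] [PseudoEMetricSpace β]
    {v : α → β} (hv : Continuous v) {D U : Set α} (hD : Dense D) (hU : IsOpen U) {C r : ℝ≥0}
    (h : HolderOnWith C r v (U ∩ D)) : HolderOnWith C r v U := by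
  have hclosed : IsClosed {z : α × α | edist (v z.1) (v z.2) ≤ C * edist z.1 z.2 ^ (r : ℝ)} :=
    isClosed_le (by fun_prop) ((ENNReal.continuous_const_mul ENNReal.coe_ne_top).comp
      (ENNReal.continuous_rpow_const.comp continuous_edist))
  intro x hx y hy
  have hmem : (x, y) ∈ closure ((U ∩ D) ×ˢ (U ∩ D)) := by
    rw [closure_prod_eq]
    exact ⟨hD.open_subset_closure_inter hU hx, hD.open_subset_closure_inter hU hy⟩
  exact hclosed.closure_subset_iff.2 (fun z hz => h z.1 hz.1 z.2 hz.2) hmem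

variable {Q : Type*} [MetricSpace Q]

lemma HasOscillationBoundOn.exists_holderOnWith {Φ : Q → ℝ → ℝ≥0∞}
    {D : Set Q} {v : Q → ℝ} (h : HasOscillationBoundOn Φ D v) (hv : Continuous v) (hD : Dense D)
    {x₀ : Q} {R θ : ℝ} (hR : 0 < R) (hθ : 0 ≤ θ) {C : ℝ≥0}
    (hΦ : ∀ z ∈ ball x₀ R, ∀ δ : ℝ, 0 < δ → δ ≤ R → Φ z δ ≤ C * ENNReal.ofReal (δ ^ θ)) :
    ∃ U ∈ 𝓝 x₀, ∃ K : ℝ≥0, HolderOnWith K θ.toNNReal v U := by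
  refine ⟨ball x₀ (R / 2), ball_mem_nhds _ (half_pos hR), 2 * C,
    holderOnWith_of_dense hv hD isOpen_ball ?_⟩
  rintro x ⟨hx, hxD⟩ y ⟨hy, hyD⟩
  rcases eq_or_ne x y with rfl | hxy
  · simp
  have hδ : 0 < dist x y := dist_pos.2 hxy
  have hδR : dist x y ≤ R := by
    linarith [dist_triangle_right x y x₀, mem_ball.1 hx, mem_ball.1 hy]
  have hsub : ball x₀ (R / 2) ⊆ ball x₀ R := ball_subset_ball (by linarith)
  calc edist (v x) (v y) ≤ Φ x (dist x y) + Φ y (dist x y) := h x hxD y hyD _ hδ le_rfl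
    _ ≤ C * ENNReal.ofReal (dist x y ^ θ) + C * ENNReal.ofReal (dist x y ^ θ) :=
        add_le_add (hΦ x (hsub hx) _ hδ hδR) (hΦ y (hsub hy) _ hδ hδR)
    _ = ↑(2 * C) * edist x y ^ (θ.toNNReal : ℝ) := by
        rw [← two_mul, ← mul_assoc, Real.coe_toNNReal _ hθ, edist_dist,
          ENNReal.ofReal_rpow_of_pos hδ]
        simp

variable [MeasurableSpace Q] {μ : Measure Q}

lemma exists_oscillationMajorant_le {p lam cPI R θ : ℝ} {C K : ℝ≥0} {g : Q → ℝ≥0∞} {x₀ : Q}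
    (hlam : 1 ≤ lam) (hR : 0 < R)
    (h : ∀ z ∈ ball x₀ R, ∀ r : ℝ, 0 < r → lam * r ≤ R →
      dyadicPotential μ p lam g z r ≤ K * ENNReal.ofReal (r ^ θ)) :
    ∃ R' > 0, ∃ K' : ℝ≥0, ∀ z ∈ ball x₀ R', ∀ δ : ℝ, 0 < δ → δ ≤ R' →
      oscillationMajorant μ p lam g C cPI z δ ≤ K' * ENNReal.ofReal (δ ^ θ) := by
  have : 0 < lam := by linarith
  set c : ℝ≥0∞ := 4 * ((C : ℝ≥0∞) ^ 3 * ENNReal.ofReal (2 * cPI)) * K * ENNReal.ofReal (4 ^ θ)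
  have hc : c ≠ ⊤ := by finiteness
  refine ⟨R / (4 * lam), by positivity, c.toNNReal, fun z hz δ hδ hδR => ?_⟩
  have hsub : R / (4 * lam) ≤ R := div_le_self hR.le (by linarith)
  have hδ' : lam * (4 * δ) ≤ R := by linarith [(le_div_iff₀ (by positivity)).1 hδR]
  calc oscillationMajorant μ p lam g C cPI z δ
      ≤ 4 * ((C : ℝ≥0∞) ^ 3 * ENNReal.ofReal (2 * cPI)) *
          (K * ENNReal.ofReal ((4 * δ) ^ θ)) := by
        rw [oscillationMajorant]
        gcongr
        exact h z (ball_subset_ball hsub hz) _ (by positivity) hδ'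
    _ = c.toNNReal * ENNReal.ofReal (δ ^ θ) := by
        rw [ENNReal.coe_toNNReal hc, Real.mul_rpow four_pos.le hδ.le,
          ENNReal.ofReal_mul (p := 4 ^ θ) (by positivity), ← mul_assoc, ← mul_assoc]

end Holder

/-- (Continuous representatives of Newtonian functions.) -/
theorem newtonian_continuous_representative
    {P : Type*} [MetricSpace P] [MeasurableSpace P] [BorelSpace P]
    (μ : MeasureTheory.Measure P) [SigmaFinite μ]
    (hball : ∀ (x : P) (r : ℝ), 0 < r → 0 < μ (Metric.ball x r) ∧ μ (Metric.ball x r) < ⊤)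
    (X : QBFL P μ)
    (cdbl : ℝ≥0∞) (hcdbl : 1 ≤ cdbl) (hdbl : IsDoublingWith μ cdbl)
    (s : ℝ) (hs : 0 < s) (cs : ℝ≥0∞) (hcs : 0 < cs) (hdim : DimensionCond μ s cs)
    (p : ℝ) (hp1 : 1 ≤ p)
    (cPI lam : ℝ) (hcPI : 0 < cPI) (hlam : 1 ≤ lam) (hPI : PoincareInequality μ p cPI lam)
    (hcase :
      (s < p ∧ EmbedsLpLoc X p) ∨
      (p = 1 ∧ s = 1 ∧ ∃ α : ℝ, 1 ≤ α ∧ EmbedsZygmundLoc X s α) ∨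
      (1 < p ∧ p = s ∧ ∃ α : ℝ, 1 < α ∧ EmbedsZygmundLoc X s α) ∨
      (p < s ∧ EmbedsLorentzLoc X s)) :
    ∀ u : P → EReal, X.memN1 u →
      ∃ v : P → ℝ, Continuous v ∧ X.memN1 (fun x => ((v x : ℝ) : EReal)) ∧
        X.cap {x | u x ≠ ((v x : ℝ) : EReal)} = 0 ∧
        ((s < p ∧ EmbedsLpLoc X p) →
          ∀ x : P, ∃ U ∈ 𝓝 x, ∃ C : ℝ≥0,
            HolderOnWith C (Real.toNNReal (1 - s / p)) v U) := by
  intro u hu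
  have hp0 : 0 < p := by linarith
  have hlam0 : 0 < lam := by linarith
  have := isOpenPosMeasure_of_forall_ball_pos fun x r hr => (hball x r hr).1
  have hfin (x : P) (r : ℝ) : μ (ball x r) ≠ ⊤ := by
    rcases le_or_gt r 0 with hr | hr
    · simp [ball_eq_empty.2 hr]
    · exact (hball x r hr).2.ne
  obtain ⟨g, hg, hgX⟩ := hu.exists_isUpperGradient
  obtain ⟨C, hC⟩ := hdim.exists_isDoublingWith hcs
  obtain ⟨v, D, hv, huv, hD, hosc⟩ := hg.exists_continuous_ae_eq hu.1
    (X.ae_abs_ne_top hu.1 hu.nrm_lt_top.ne) hfin hC hPI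
    (vanishesLocallyUniformly_dyadicPotential_of_embeds hball hdim hcs hp1 hlam0 hcase hg.1 hgX)
  refine ⟨v, hv, hu.of_continuous_ae_eq hv huv, hu.cap_ne_eq_zero hv huv, ?_⟩
  rintro ⟨hsp, hX⟩ x₀
  obtain ⟨R, hR, K, hK⟩ := hX.exists_dyadicPotential_le hball hdim hcs hp0 hsp hlam0 hgX x₀
  obtain ⟨R', hR', K', hK'⟩ := exists_oscillationMajorant_le hlam hR hK
  exact hosc.exists_holderOnWith hv hD hR' (sub_nonneg.2 ((div_le_one hp0).2 hsp.le)) hK'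

end
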